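/- Assume a_0 is the unique point of ℤ^n lying in the interior of Δ, the convex hull of a_1,…,a_N in ℝ^n (so that â_0 is the unique element of M° with 0-th coordinate 1). Let ξ ∈ S be such that ξ_{â_0} is an invertible element of R and ‖ξ_{â_0}‖ = ‖ξ‖. Then the coefficient η_{â_0} of α*(ξ) is an invertible element of R and ‖α*(ξ)‖ = ‖η_{â_0}‖ = (1/p)·‖ξ_{â_0}‖. If moreover ξ ∈ S' and ξ_{â_0} is invertible in R', then η_{â_0} is invertible in R'. -/

import Mathlib

open scoped BigOperators Classical

namespace AHG

/-- `hat v = (1, v) ∈ ℤ^{n+1}`: coordinate `0` equals `1`, the rest is `v`. -/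
def hat {n : ℕ} (v : Fin n → ℤ) : Fin (n + 1) → ℤ := Fin.cons 1 v

/-- The coefficients `b_i` of the Dwork series
`θ(t) = exp(π(t - t^p)) = exp(πt)·exp(-πt^p) = Σ b_i t^i`;
explicitly `b_i = Σ_{j + p k = i} π^{j+k} (-1)^k / (j! k!)`. -/
noncomputable def dworkB (p : ℕ) {K : Type*} [Field K] (π : K) (i : ℕ) : K :=
  ∑ k ∈ Finset.range (i + 1),
    if p * k ≤ i then
      ((-1 : K) ^ k * π ^ (i - p * k + k)) /
        ((Nat.factorial (i - p * k) : K) * (Nat.factorial k : K))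
    else 0

/-- The real cone `C` generated by `â_0, …, â_N`. -/
def cone {n N : ℕ} (a : Fin (N + 1) → Fin n → ℤ) : Set (Fin (n + 1) → ℝ) :=
  {x | ∃ t : Fin (N + 1) → ℝ, (∀ j, 0 ≤ t j) ∧
      x = ∑ j, t j • fun i => (hat (a j) i : ℝ)}

/-- `M = C ∩ ℤA`. -/
def latticeM {n N : ℕ} (a : Fin (N + 1) → Fin n → ℤ) : Set (Fin (n + 1) → ℤ) :=
  {μ | (fun i => (μ i : ℝ)) ∈ cone a ∧
      μ ∈ AddSubgroup.closure (Set.range fun j => hat (a j))}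

/-- `M°`: the elements of `M` lying on no proper (exposed) face of `C`, i.e. every linear
functional nonnegative on `C` and vanishing at `μ` vanishes identically on `C`. -/
def latticeMint {n N : ℕ} (a : Fin (N + 1) → Fin n → ℤ) : Set (Fin (n + 1) → ℤ) :=
  {μ | μ ∈ latticeM a ∧
      ∀ ℓ : (Fin (n + 1) → ℝ) →ₗ[ℝ] ℝ, (∀ x ∈ cone a, 0 ≤ ℓ x) →
        ℓ (fun i => (μ i : ℝ)) = 0 → ∀ x ∈ cone a, ℓ x = 0}

/-- `a 0` is the unique lattice point interior to `Δ = conv(a 1, …, a N)`. -/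
def uniqueInteriorPoint {n N : ℕ} (a : Fin (N + 1) → Fin n → ℤ) : Prop :=
  (fun i => (a 0 i : ℝ)) ∈
      interior (convexHull ℝ (Set.range fun j : Fin N => fun i => (a j.succ i : ℝ))) ∧
    ∀ v : Fin n → ℤ,
      (fun i => (v i : ℝ)) ∈
          interior (convexHull ℝ (Set.range fun j : Fin N => fun i => (a j.succ i : ℝ))) →
        v = a 0

/-- The set `L_+`, identified with the tuples `(l_1,…,l_N) ∈ ℤ_{≥0}^N` such that
`Σ l_i â_i = (Σ l_i) â_0` (then `l_0 = -Σ l_i`). -/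
def LplusSet {n N : ℕ} (a : Fin (N + 1) → Fin n → ℤ) : Set (Fin N → ℕ) :=
  {l | ∑ i : Fin N, l i • hat (a i.succ) = (∑ i : Fin N, l i) • hat (a 0)}

/-- The norm (sup of coefficient norms) of an element of `R`, i.e. of a formal power series
in the variables `λ_i/λ_0`, `i = 1, …, N`. -/
noncomputable def Rnorm {N : ℕ} {K : Type*} [NormedField K]
    (f : MvPowerSeries (Fin N) K) : ℝ :=
  ⨆ ν : Fin N →₀ ℕ, ‖f ν‖

/-- Membership in `R`: bounded coefficients. -/
def memR {N : ℕ} {K : Type*} [NormedField K] (f : MvPowerSeries (Fin N) K) : Prop :=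
  BddAbove (Set.range fun ν : Fin N →₀ ℕ => ‖f ν‖)

/-- Norm-convergence (in the sup norm of `R`) of a series of elements of `R` to `g`. -/
def HasSumR {ι : Type*} {N : ℕ} {K : Type*} [NormedField K]
    (f : ι → MvPowerSeries (Fin N) K) (g : MvPowerSeries (Fin N) K) : Prop :=
  Filter.Tendsto (fun s : Finset ι => Rnorm (g - ∑ i ∈ s, f i)) Filter.atTop (nhds 0)

/-- Invertibility in `R`. -/
def invR {N : ℕ} {K : Type*} [NormedField K] (f : MvPowerSeries (Fin N) K) : Prop :=
  memR f ∧ ∃ g : MvPowerSeries (Fin N) K, memR g ∧ f * g = 1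

/-- `B_μ(1, y_1, …, y_N)` as a power series (in fact a polynomial) in `y_i = λ_i/λ_0`:
the coefficient of `y^ν` is `b_{ν_0} b_{ν_1} ⋯ b_{ν_N}` where `ν_0 = μ_0 - Σ ν_i`,
whenever `(ν_0, ν_1, …, ν_N)` is a nonnegative solution of `Σ ν_i â_i = μ`, and `0` otherwise. -/
noncomputable def Bone (p : ℕ) {n N : ℕ} (a : Fin (N + 1) → Fin n → ℤ)
    {K : Type*} [Field K] (π : K) (μ : Fin (n + 1) → ℤ) : MvPowerSeries (Fin N) K :=
  fun ν =>
    if 0 ≤ μ 0 - ∑ i : Fin N, (ν i : ℤ) ∧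
        (μ 0 - ∑ i : Fin N, (ν i : ℤ)) • hat (a 0) +
          ∑ i : Fin N, (ν i : ℤ) • hat (a i.succ) = μ then
      dworkB p π (μ 0 - ∑ i : Fin N, (ν i : ℤ)).toNat * ∏ i : Fin N, dworkB p π (ν i)
    else 0

/-- The substitution `λ_i/λ_0 ↦ λ_i^p/λ_0^p` on `R`, i.e. `ξ(λ) ↦ ξ(λ^p)`. -/
noncomputable def frobR (p : ℕ) {N : ℕ} {K : Type*} [Field K]
    (f : MvPowerSeries (Fin N) K) : MvPowerSeries (Fin N) K :=
  fun ν => if h : ∃ ν' : Fin N →₀ ℕ, p • ν' = ν then f h.choose else 0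

/-- The term indexed by `ν ∈ M°` in the series defining `η_ρ`:
`π^{ρ_0-ν_0} B_{pν-ρ}(1, λ_1/λ_0, …, λ_N/λ_0) ξ_ν(λ^p)` when `pν - ρ ∈ M`, else `0`. -/
noncomputable def etaTerm (p : ℕ) {n N : ℕ} (a : Fin (N + 1) → Fin n → ℤ)
    {K : Type*} [Field K] (π : K)
    (ξ : {μ : Fin (n + 1) → ℤ // μ ∈ latticeMint a} → MvPowerSeries (Fin N) K)
    (ρ : Fin (n + 1) → ℤ) (ν : {μ : Fin (n + 1) → ℤ // μ ∈ latticeMint a}) :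
    MvPowerSeries (Fin N) K :=
  if (p : ℤ) • ν.1 - ρ ∈ latticeM a then
    π ^ (ρ 0 - ν.1 0) • (Bone p a π ((p : ℤ) • ν.1 - ρ) * frobR p (ξ ν))
  else 0


/-- The index type `M°` (as a subtype). -/
abbrev Msub {n N : ℕ} (a : Fin (N + 1) → Fin n → ℤ) : Type _ :=
  {μ : Fin (n + 1) → ℤ // μ ∈ latticeMint a}

/-- Membership in `S`: a family `(ξ_μ)_{μ ∈ M°}` of elements of `R` with uniformly
bounded coefficients. -/
def memS {n N : ℕ} (a : Fin (N + 1) → Fin n → ℤ) {K : Type*} [NormedField K]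
    (ξ : {μ : Fin (n + 1) → ℤ // μ ∈ latticeMint a} → MvPowerSeries (Fin N) K) : Prop :=
  BddAbove (Set.range
    fun q : {μ : Fin (n + 1) → ℤ // μ ∈ latticeMint a} × (Fin N →₀ ℕ) => ‖ξ q.1 q.2‖)

/-- The norm on `S`. -/
noncomputable def Snorm {n N : ℕ} (a : Fin (N + 1) → Fin n → ℤ) {K : Type*} [NormedField K]
    (ξ : {μ : Fin (n + 1) → ℤ // μ ∈ latticeMint a} → MvPowerSeries (Fin N) K) : ℝ :=
  ⨆ μ : {μ : Fin (n + 1) → ℤ // μ ∈ latticeMint a}, Rnorm (ξ μ)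

/-- The truncation `Φ_1` of `Φ`, as a function of `λ = (λ_0, …, λ_N)`. -/
noncomputable def Phi1 (p : ℕ) {n N : ℕ} (a : Fin (N + 1) → Fin n → ℤ)
    {K : Type*} [Field K] (lam : Fin (N + 1) → K) : K :=
  ∑ l ∈ (Fintype.piFinset fun _ : Fin N => Finset.range p).filter
      (fun l => l ∈ LplusSet a ∧ ∑ i : Fin N, l i ≤ p - 1),
    (-1 : K) ^ (∑ i : Fin N, l i) * (Nat.multinomial Finset.univ l : K) *
      ∏ i : Fin N, (lam i.succ / lam 0) ^ l i

/-- The open polydisk `𝒟`. -/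
def Dopen {N : ℕ} {K : Type*} [NormedField K] : Set (Fin (N + 1) → K) :=
  {lam | lam 0 ≠ 0 ∧ ∀ i : Fin N, ‖lam i.succ / lam 0‖ < 1}

/-- The region `𝒟_+`. -/
def Dplus (p : ℕ) {n N : ℕ} (a : Fin (N + 1) → Fin n → ℤ) {K : Type*} [NormedField K] :
    Set (Fin (N + 1) → K) :=
  {lam | lam 0 ≠ 0 ∧ (∀ i : Fin N, ‖lam i.succ / lam 0‖ ≤ 1) ∧ ‖Phi1 p a lam‖ = 1}

/-- `f` is (on `𝒟_+`) a rational function of `λ_1/λ_0, …, λ_N/λ_0` defined at every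
point of `𝒟_+`. -/
def RatOnDplus (p : ℕ) {n N : ℕ} (a : Fin (N + 1) → Fin n → ℤ) {K : Type*} [NormedField K]
    (f : (Fin (N + 1) → K) → K) : Prop :=
  ∃ q r : MvPolynomial (Fin N) K,
    (∀ lam ∈ Dplus p a (K := K), MvPolynomial.eval (fun i => lam i.succ / lam 0) r ≠ 0) ∧
    ∀ lam ∈ Dplus p a (K := K),
      f lam = MvPolynomial.eval (fun i => lam i.succ / lam 0) q /
        MvPolynomial.eval (fun i => lam i.succ / lam 0) r

/-- `F` is a uniform limit on `𝒟_+` of rational functions in the `λ_i/λ_0` defined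
at every point of `𝒟_+`. -/
def UnifLimitRat (p : ℕ) {n N : ℕ} (a : Fin (N + 1) → Fin n → ℤ) {K : Type*} [NormedField K]
    (F : (Fin (N + 1) → K) → K) : Prop :=
  ∃ u : ℕ → (Fin (N + 1) → K) → K, (∀ k, RatOnDplus p a (u k)) ∧
    TendstoUniformlyOn u F Filter.atTop (Dplus p a (K := K))

/-- Membership in `R'`: the power series converges on `𝒟` and its sum extends to an
element of `R'`, i.e. to a uniform limit on `𝒟_+` of rational functions in the `λ_i/λ_0`
defined at every point of `𝒟_+`. -/
def memR' (p : ℕ) {n N : ℕ} (a : Fin (N + 1) → Fin n → ℤ) {K : Type*} [NormedField K]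
    (c : MvPowerSeries (Fin N) K) : Prop :=
  ∃ F : (Fin (N + 1) → K) → K, UnifLimitRat p a F ∧
    ∀ lam ∈ Dopen (N := N) (K := K),
      HasSum (fun ν : Fin N →₀ ℕ => c ν * ∏ i : Fin N, (lam i.succ / lam 0) ^ ν i) (F lam)

/-- Invertibility in `R'`. -/
def invR' (p : ℕ) {n N : ℕ} (a : Fin (N + 1) → Fin n → ℤ) {K : Type*} [NormedField K]
    (f : MvPowerSeries (Fin N) K) : Prop :=
  memR' p a f ∧ ∃ g : MvPowerSeries (Fin N) K, memR' p a g ∧ f * g = 1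

/-- Membership in `S'`. -/
def memS' (p : ℕ) {n N : ℕ} (a : Fin (N + 1) → Fin n → ℤ) {K : Type*} [NormedField K]
    (ξ : {μ : Fin (n + 1) → ℤ // μ ∈ latticeMint a} → MvPowerSeries (Fin N) K) : Prop :=
  memS a ξ ∧ ∀ μ, memR' p a (ξ μ)

/-- Membership in `T`: `ξ ∈ S`, `ξ_{â_0} = 1` and `‖ξ‖ = 1`; the distinguished index
`μ0 ∈ M°` is the point `â_0`. -/
def memT {n N : ℕ} (a : Fin (N + 1) → Fin n → ℤ) {K : Type*} [NormedField K]
    (μ0 : {μ : Fin (n + 1) → ℤ // μ ∈ latticeMint a})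
    (ξ : {μ : Fin (n + 1) → ℤ // μ ∈ latticeMint a} → MvPowerSeries (Fin N) K) : Prop :=
  memS a ξ ∧ ξ μ0 = 1 ∧ Snorm a ξ = 1

/-- `ζ` is a value of the map `β` at `ξ`: `ζ = α*(ξ)/η_{â_0}`, where
`α*(ξ) = (η_ρ)_{ρ ∈ M°}` is given by the norm-convergent series of `etaTerm`s. -/
def isBeta (p : ℕ) {n N : ℕ} (a : Fin (N + 1) → Fin n → ℤ) {K : Type*} [NormedField K] (π : K)
    (μ0 : {μ : Fin (n + 1) → ℤ // μ ∈ latticeMint a})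
    (ξ ζ : {μ : Fin (n + 1) → ℤ // μ ∈ latticeMint a} → MvPowerSeries (Fin N) K) : Prop :=
  ∃ η : {μ : Fin (n + 1) → ℤ // μ ∈ latticeMint a} → MvPowerSeries (Fin N) K,
    (∀ ρ, HasSumR (etaTerm p a π ξ ρ.1) (η ρ)) ∧ ∀ ρ, ζ ρ = η ρ * (η μ0)⁻¹

/-- The coefficients `ξ_ρ` (Eq. (3.4) of the paper) of
`ξ(λ,x) = γ°(G(λ_0,x) ∏_{i=1}^N exp(πλ_i x^{â_i}))`:
`ξ_ρ = Σ (-1)^{ρ_0-1+Σl_i} (ρ_0-1+Σl_i)!/(l_1!⋯l_N!) ∏ (λ_i/λ_0)^{l_i}`, summed over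
`(l_1,…,l_N) ∈ ℤ_{≥0}^N` such that `l_0 := ρ_0-1+Σl_i ≥ 0` and
`Σ l_i â_i - (l_0+1) â_0 = -ρ`. -/
noncomputable def xiRho {n N : ℕ} (a : Fin (N + 1) → Fin n → ℤ) (K : Type*) [Field K]
    (ρ : Fin (n + 1) → ℤ) : MvPowerSeries (Fin N) K :=
  fun l =>
    if 0 ≤ ρ 0 - 1 + ∑ i : Fin N, (l i : ℤ) ∧
        (∑ i : Fin N, (l i : ℤ) • hat (a i.succ)) -
          (ρ 0 + ∑ i : Fin N, (l i : ℤ)) • hat (a 0) = -ρ then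
      (-1 : K) ^ (ρ 0 - 1 + ∑ i : Fin N, (l i : ℤ)) *
        ((ρ 0 - 1 + ∑ i : Fin N, (l i : ℤ)).toNat.factorial : K) /
        ((∏ i : Fin N, (l i).factorial : ℕ) : K)
    else 0

/-- The series `Φ`, as a formal power series in the variables `λ_i/λ_0`. -/
noncomputable def PhiSeries {n N : ℕ} (a : Fin (N + 1) → Fin n → ℤ) (K : Type*) [Field K] :
    MvPowerSeries (Fin N) K :=
  fun l =>
    if (fun i => l i) ∈ LplusSet a then
      (-1 : K) ^ (∑ i : Fin N, l i) * (Nat.multinomial Finset.univ l : K)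
    else 0

/-- The truncation `Φ_1` of `Φ`, as a formal power series in the variables `λ_i/λ_0`. -/
noncomputable def Phi1Series (p : ℕ) {n N : ℕ} (a : Fin (N + 1) → Fin n → ℤ)
    (K : Type*) [Field K] : MvPowerSeries (Fin N) K :=
  fun l =>
    if (fun i => l i) ∈ LplusSet a ∧ ∑ i : Fin N, l i ≤ p - 1 then
      (-1 : K) ^ (∑ i : Fin N, l i) * (Nat.multinomial Finset.univ l : K)
    else 0

/-- `B_μ(λ_0, …, λ_N)` as a function of `λ` (a finite sum; `finsum` junk value `0`
is irrelevant since the relevant index set is finite). -/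
noncomputable def Bfull (p : ℕ) {n N : ℕ} (a : Fin (N + 1) → Fin n → ℤ)
    {K : Type*} [Field K] (π : K) (μ : Fin (n + 1) → ℤ) (lam : Fin (N + 1) → K) : K :=
  finsum fun ν : Fin (N + 1) → ℕ =>
    if ∑ j, ν j • hat (a j) = μ then
      (∏ j, dworkB p π (ν j)) * ∏ j, lam j ^ ν j
    else 0

end AHG

open scoped BigOperators Classical

/-!
Dwork's estimate `‖b_i‖ ≤ ‖π‖ ^ (i - (2 * p - 1) * ⌊i / p ^ 2⌋)` on the coefficients of `θ` shows
that every term of `η_ρ` has norm at most `‖ξ‖ / p`. In `η_{â_0}` all terms but the one with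
`ν = â_0` have norm strictly below that bound, since `â_0` is the only interior point of degree one.
The remaining coefficient `B_{(p-1)â_0}` is congruent to `p Φ_1` modulo `p ^ 2` by Wilson's theorem,
because `b_i = π ^ i / i!` for `i < p` and `π ^ (p - 1) = -p`. Hence
`η_{â_0} ≡ p Φ_1 ξ_{â_0}(λ ^ p)` modulo terms of norm smaller than `‖ξ‖ / p`.

A bounded series is invertible in `R` exactly when its constant term attains the norm, a property
which passes through the congruence as `Φ_1` has constant term `1`. On `𝒟_+` the right-hand side
is bounded away from zero as `‖Φ_1‖ = 1` there. The ring `R'` is the closure of the expansions of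
rational functions regular on `𝒟_+`, so it is stable under `λ ↦ λ ^ p`, and the inverse of `η_{â_0}`
is a geometric series in `R'`.
-/

namespace AHG

section DworkLemma

open PowerSeries

/-- A growth function for which Dwork's integrality lemma holds: the series `f` over `ℚ_p` with
`‖coeff k f‖ ≤ D k` form a ring on which the Frobenius substitution `X ↦ X ^ p` is congruent to
the `p`-th power modulo `p`. The constant function `1` gives the classical lemma. -/
structure DworkGrowth (p : ℕ) (D : ℕ → ℝ) : Prop where
  zero : D 0 = 1
  monotone : Monotone D
  mul_le : ∀ i j, D i * D j ≤ D (i + j)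
  pow_le : ∀ j, D j = 1 ∨ p * D j ^ p ≤ D (p * j)

namespace DworkGrowth

variable {p : ℕ} {D : ℕ → ℝ}

lemma one_le (hD : DworkGrowth p D) (k : ℕ) : 1 ≤ D k := hD.zero ▸ hD.monotone k.zero_le

lemma nonneg (hD : DworkGrowth p D) (k : ℕ) : 0 ≤ D k := zero_le_one.trans (hD.one_le k)

variable [Fact p.Prime]

/-- The ring of power series over `ℚ_p` whose coefficients are dominated by `D`. -/
noncomputable def subring (hD : DworkGrowth p D) : Subring ℚ_[p]⟦X⟧ where
  carrier := {f | ∀ k, ‖coeff k f‖ ≤ D k}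
  mul_mem' {f g} hf hg k := by
    rw [coeff_mul]
    refine IsUltrametricDist.norm_sum_le_of_forall_le_of_nonneg (hD.nonneg k) fun x hx ↦ ?_
    rw [norm_mul, ← Finset.HasAntidiagonal.mem_antidiagonal.1 hx]
    exact (mul_le_mul (hf _) (hg _) (norm_nonneg _) (hD.nonneg _)).trans (hD.mul_le _ _)
  one_mem' k := by
    rw [coeff_one]
    split_ifs
    · simpa using hD.one_le k
    · simpa using hD.nonneg k
  add_mem' {f g} hf hg k := by
    rw [map_add]
    exact (IsUltrametricDist.norm_add_le_max _ _).trans (max_le (hf k) (hg k))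
  zero_mem' k := by simpa using hD.nonneg k
  neg_mem' {f} hf k := by
    rw [map_neg, norm_neg]
    exact hf k

lemma mem_subring (hD : DworkGrowth p D) {f : ℚ_[p]⟦X⟧} :
    f ∈ hD.subring ↔ ∀ k, ‖coeff k f‖ ≤ D k := Iff.rfl

lemma monomial_mem_subring (hD : DworkGrowth p D) {j : ℕ} {x : ℚ_[p]} (hx : ‖x‖ ≤ D j) :
    monomial j x ∈ hD.subring := by
  refine hD.mem_subring.2 fun k ↦ ?_
  rw [coeff_monomial]
  split_ifs with hkj
  · rwa [hkj]
  · simpa using hD.nonneg k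

lemma trunc_mem_subring (hD : DworkGrowth p D) {f : ℚ_[p]⟦X⟧} {k : ℕ}
    (hf : ∀ j < k, ‖coeff j f‖ ≤ D j) : (trunc k f : ℚ_[p]⟦X⟧) ∈ hD.subring := by
  refine hD.mem_subring.2 fun j ↦ ?_
  rw [Polynomial.coeff_coe, coeff_trunc]
  split_ifs with hjk
  · exact hf j hjk
  · simpa using hD.nonneg j

end DworkGrowth

lemma coeff_pow_eq_coeff_trunc_pow_add {R : Type*} [CommRing R] {f : R⟦X⟧}
    (hf : constantCoeff f = 1) {k : ℕ} (hk : k ≠ 0) (m : ℕ) :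
    coeff k (f ^ m) = coeff k ((trunc k f : R⟦X⟧) ^ m) + m * coeff k f := by
  set s : R⟦X⟧ := ((trunc k f : Polynomial R) : R⟦X⟧) with hs
  set u : R⟦X⟧ := mk fun i ↦ coeff (i + k) f with hu
  have hfs : f = s + X ^ k * u := by rw [add_comm]; exact eq_X_pow_mul_shift_add_trunc k f
  have hs_zero : constantCoeff s = 1 := by
    rw [← coeff_zero_eq_constantCoeff_apply, hs, Polynomial.coeff_coe, coeff_trunc,
      if_pos (Nat.pos_of_ne_zero hk), coeff_zero_eq_constantCoeff_apply, hf]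
  obtain ⟨c, hc⟩ := Polynomial.powAddExpansion s (X ^ k * u) m
  have hquad : coeff k (c * (X ^ k * u) ^ 2) = 0 := by
    rw [show c * (X ^ k * u) ^ 2 = X ^ (k + k) * (c * u ^ 2) by ring, coeff_X_pow_mul',
      if_neg (by omega)]
  have hlin : coeff k ((m : R⟦X⟧) * s ^ (m - 1) * (X ^ k * u)) = m * coeff k f := by
    rw [show (m : R⟦X⟧) * s ^ (m - 1) * (X ^ k * u) =
        X ^ k * ((m : R⟦X⟧) * s ^ (m - 1) * u) by ring,
      coeff_X_pow_mul', if_pos le_rfl, Nat.sub_self, coeff_zero_eq_constantCoeff_apply]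
    simp [hs_zero, hu]
  conv_lhs => rw [hfs, hc, map_add, map_add, hquad, hlin, add_zero]

lemma coeff_expand_mul_eq_coeff_expand_trunc_mul {R : Type*} [CommRing R] (f g : R⟦X⟧)
    {k : ℕ} (hk : k ≠ 0) {p : ℕ} (hp : 2 ≤ p) :
    coeff k (expand p (by omega) f * g) =
      coeff k (expand p (by omega) (trunc k f : R⟦X⟧) * g) := by
  conv_lhs => rw [eq_X_pow_mul_shift_add_trunc k f]
  rw [map_add, map_mul (expand p _), map_pow, expand_X, ← pow_mul, add_mul, map_add, mul_assoc,
    coeff_X_pow_mul', if_neg (by nlinarith [Nat.pos_of_ne_zero hk]), zero_add]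

variable {p : ℕ} [hp : Fact p.Prime] {D : ℕ → ℝ}

lemma norm_sub_pow_prime_le {x : ℚ_[p]} (hx : ‖x‖ ≤ 1) : ‖x - x ^ p‖ ≤ (p : ℝ)⁻¹ := by
  obtain ⟨x, rfl⟩ : ∃ y : ℤ_[p], (y : ℚ_[p]) = x := ⟨⟨x, hx⟩, rfl⟩
  have hmem : x - x ^ p ∈ Ideal.span {(p : ℤ_[p]) ^ 1} := by
    rw [pow_one, ← PadicInt.maximalIdeal_eq_span_p, ← PadicInt.ker_toZMod, RingHom.mem_ker]
    simp
  simpa [PadicInt.norm_def] using (PadicInt.norm_le_pow_iff_mem_span_pow _ 1).2 hmem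

lemma DworkGrowth.norm_sub_pow_le (hD : DworkGrowth p D) {j : ℕ} {x : ℚ_[p]} (hx : ‖x‖ ≤ D j) :
    ‖x - x ^ p‖ ≤ (p : ℝ)⁻¹ * D (p * j) := by
  have hp_pos : (0 : ℝ) < p := mod_cast hp.out.pos
  rcases hD.pow_le j with hj | hj
  · exact (norm_sub_pow_prime_le (hj ▸ hx)).trans
      (le_mul_of_one_le_right (inv_nonneg.2 hp_pos.le) (hD.one_le _))
  · have hpow : D j ^ p ≤ (p : ℝ)⁻¹ * D (p * j) := (le_inv_mul_iff₀ hp_pos).2 hj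
    rw [sub_eq_add_neg]
    refine (IsUltrametricDist.norm_add_le_max _ _).trans (max_le ?_ ?_)
    · exact (hx.trans (le_self_pow₀ (hD.one_le j) hp.out.ne_zero)).trans hpow
    · rw [norm_neg, norm_pow]
      exact (pow_le_pow_left₀ (norm_nonneg x) hx p).trans hpow

lemma natCast_mul_C_inv_mul {a : ℚ_[p]⟦X⟧} :
    (p : ℚ_[p]⟦X⟧) * (C (p : ℚ_[p])⁻¹ * a) = a := by
  have hp_ne : (p : ℚ_[p]) ≠ 0 := mod_cast hp.out.ne_zero
  rw [← mul_assoc, ← map_natCast (C (R := ℚ_[p])), ← map_mul, mul_inv_cancel₀ hp_ne, map_one,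
    one_mul]

lemma DworkGrowth.exists_eq_natCast_mul (hD : DworkGrowth p D) {f : ℚ_[p]⟦X⟧}
    (hf : ∀ k, ‖coeff k f‖ ≤ (p : ℝ)⁻¹ * D k) : ∃ g ∈ hD.subring, f = p * g := by
  refine ⟨C (p : ℚ_[p])⁻¹ * f, fun k ↦ ?_, natCast_mul_C_inv_mul.symm⟩
  rw [coeff_C_mul, norm_mul, norm_inv, Padic.norm_p, inv_inv]
  exact (le_inv_mul_iff₀ (mod_cast hp.out.pos)).1 (hf k)

lemma DworkGrowth.exists_expand_monomial_eq (hD : DworkGrowth p D) {j : ℕ} {x : ℚ_[p]}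
    (hx : ‖x‖ ≤ D j) : ∃ r ∈ hD.subring,
      expand p hp.out.ne_zero (monomial j x) = monomial j x ^ p + p * r := by
  obtain ⟨r, hr, h⟩ := hD.exists_eq_natCast_mul (f := monomial (p * j) (x - x ^ p)) fun k ↦ by
    rw [coeff_monomial]
    split_ifs with hk
    · rw [hk]
      exact hD.norm_sub_pow_le hx
    · simpa using mul_nonneg (inv_nonneg.2 p.cast_nonneg) (hD.nonneg k)
  refine ⟨r, hr, ?_⟩
  rw [expand_monomial, monomial_pow, ← h, map_sub]
  ring

lemma DworkGrowth.exists_expand_coe_eq (hD : DworkGrowth p D) {s : Polynomial ℚ_[p]}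
    (hs : (s : ℚ_[p]⟦X⟧) ∈ hD.subring) : ∃ r ∈ hD.subring,
      expand p hp.out.ne_zero (s : ℚ_[p]⟦X⟧) = s ^ p + p * r := by
  have hsum : (s : ℚ_[p]⟦X⟧) = ∑ j ∈ s.support, monomial j (s.coeff j) := by
    conv_lhs => rw [s.as_sum_support]
    rw [← Polynomial.coeToPowerSeries.ringHom_apply, map_sum]
    simp
  rw [hsum]
  refine (Finset.sum_induction _ (fun f ↦ f ∈ hD.subring ∧ ∃ r ∈ hD.subring,
    expand p hp.out.ne_zero f = f ^ p + p * r) ?_ ?_ ?_).2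
  · rintro f g ⟨hf, r, hr, hfr⟩ ⟨hg, t, ht, hgt⟩
    obtain ⟨u, hu⟩ := exists_add_pow_prime_eq hp.out (⟨f, hf⟩ : hD.subring) ⟨g, hg⟩
    have hu' : (f + g) ^ p = f ^ p + g ^ p + p * f * g * u := congrArg Subtype.val hu
    refine ⟨add_mem hf hg, r + t - f * g * u,
      sub_mem (add_mem hr ht) (mul_mem (mul_mem hf hg) u.2), ?_⟩
    rw [map_add, hfr, hgt, hu']
    ring
  · exact ⟨zero_mem _, 0, zero_mem _, by simp [hp.out.ne_zero]⟩
  · intro j _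
    have hj : ‖s.coeff j‖ ≤ D j := by simpa using hs j
    exact ⟨hD.monomial_mem_subring hj, hD.exists_expand_monomial_eq hj⟩

lemma DworkGrowth.expand_mem_subring (hD : DworkGrowth p D) {f : ℚ_[p]⟦X⟧}
    (hf : f ∈ hD.subring) : expand p hp.out.ne_zero f ∈ hD.subring := by
  refine hD.mem_subring.2 fun k ↦ ?_
  rw [coeff_expand]
  split_ifs
  · exact (hf _).trans (hD.monotone (Nat.div_le_self k p))
  · simpa using hD.nonneg k

theorem DworkGrowth.mem_subring_of_pow_eq (hD : DworkGrowth p D) {f g : ℚ_[p]⟦X⟧}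
    (hf : constantCoeff f = 1) (hg : g ∈ hD.subring)
    (h : f ^ p = expand p hp.out.ne_zero f * (1 + p * g)) : f ∈ hD.subring := by
  refine hD.mem_subring.2 fun k ↦ ?_
  induction k using Nat.strong_induction_on with
  | _ k ih =>
  rcases eq_or_ne k 0 with rfl | hk
  · simp [hf, hD.zero]
  have hs := hD.trunc_mem_subring ih
  obtain ⟨r, hr, hsr⟩ := hD.exists_expand_coe_eq hs
  set s : ℚ_[p]⟦X⟧ := ((trunc k f : Polynomial ℚ_[p]) : ℚ_[p]⟦X⟧)
  have hcoeff : coeff k (s ^ p) + p * coeff k f =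
      coeff k (expand p hp.out.ne_zero s * (1 + (p : ℚ_[p]⟦X⟧) * g)) := by
    rw [← coeff_pow_eq_coeff_trunc_pow_add hf hk, h,
      coeff_expand_mul_eq_coeff_expand_trunc_mul f _ hk hp.out.two_le]
  have hexpand : expand p hp.out.ne_zero s * (1 + p * g) =
      s ^ p + C (p : ℚ_[p]) * (r + expand p hp.out.ne_zero s * g) := by
    rw [map_natCast]
    linear_combination hsr
  rw [hexpand, map_add, coeff_C_mul, add_right_inj] at hcoeff
  rw [mul_left_cancel₀ (mod_cast hp.out.ne_zero) hcoeff]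
  exact add_mem hr (mul_mem (hD.expand_mem_subring hs) hg) k

end DworkLemma

section GrowthFunction

/-- The function `1, w C, w C², w C³, …`, a candidate for bounding coefficients in Dwork's
lemma: evaluated at `k / p ^ 2`, with `w ^ (p - 1) = p⁻¹` and `C = p ^ 2 / w`, it is a
`DworkGrowth`. -/
noncomputable def geomGrowth (w C : ℝ) (m : ℕ) : ℝ := if m = 0 then 1 else w * C ^ m

lemma geomGrowth_of_ne_zero {w C : ℝ} {m : ℕ} (hm : m ≠ 0) : geomGrowth w C m = w * C ^ m :=
  if_neg hm

variable {w C : ℝ}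

lemma geomGrowth_monotone (hw : 0 ≤ w) (hC : 1 ≤ C) (hwC : 1 ≤ w * C) :
    Monotone (geomGrowth w C) := by
  refine monotone_nat_of_le_succ fun m ↦ ?_
  rw [geomGrowth_of_ne_zero m.succ_ne_zero]
  rcases eq_or_ne m 0 with rfl | hm
  · simpa [geomGrowth] using hwC
  · rw [geomGrowth_of_ne_zero hm]
    gcongr
    omega

lemma geomGrowth_mul_le (hw : 0 ≤ w) (hw_le : w ≤ 1) (hC : 0 ≤ C) (i j : ℕ) :
    geomGrowth w C i * geomGrowth w C j ≤ geomGrowth w C (i + j) := by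
  rcases eq_or_ne i 0 with rfl | hi
  · simp [geomGrowth]
  rcases eq_or_ne j 0 with rfl | hj
  · simp [geomGrowth]
  rw [geomGrowth_of_ne_zero hi, geomGrowth_of_ne_zero hj, geomGrowth_of_ne_zero (by omega)]
  calc w * C ^ i * (w * C ^ j) = w * (w * C ^ (i + j)) := by rw [pow_add]; ring
    _ ≤ 1 * (w * C ^ (i + j)) := by gcongr
    _ = w * C ^ (i + j) := one_mul _

lemma dworkGrowth_geomGrowth {p : ℕ} (hp : p.Prime) (hw : 0 < w)
    (hwp : w ^ (p - 1) = (p : ℝ)⁻¹) :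
    DworkGrowth p fun k ↦ geomGrowth w (p ^ 2 * w⁻¹) (k / p ^ 2) := by
  have hp_one : (1 : ℝ) ≤ p := mod_cast hp.one_le
  have hw_le : w ≤ 1 :=
    (pow_le_one_iff_of_nonneg hw.le (Nat.sub_ne_zero_of_lt hp.one_lt)).1
      (hwp ▸ inv_le_one_of_one_le₀ hp_one)
  have hwC : w * (p ^ 2 * w⁻¹) = p ^ 2 := by field_simp
  have hC : (1 : ℝ) ≤ p ^ 2 * w⁻¹ :=
    one_le_mul_of_one_le_of_one_le (one_le_pow₀ hp_one) ((one_le_inv₀ hw).2 hw_le)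
  have hmono := geomGrowth_monotone hw.le hC ((one_le_pow₀ hp_one).trans_eq hwC.symm)
  refine ⟨by simp [geomGrowth], fun i j hij ↦ hmono (Nat.div_le_div_right hij), fun i j ↦ ?_,
    fun j ↦ ?_⟩
  · exact (geomGrowth_mul_le hw.le hw_le (zero_le_one.trans hC) _ _).trans
      (hmono Nat.div_add_div_le_add_div)
  · rcases eq_or_ne (j / p ^ 2) 0 with hj | hj
    · exact Or.inl (by simp [hj, geomGrowth])
    have hle : p * (j / p ^ 2) ≤ p * j / p ^ 2 := Nat.mul_div_le_mul_div_assoc _ _ _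
    have hpow : p * w ^ p = w := by
      rw [← Nat.sub_add_cancel hp.one_le, pow_succ, hwp, Nat.sub_add_cancel hp.one_le]
      field_simp
    refine Or.inr (le_trans (le_of_eq ?_) (hmono hle))
    rw [geomGrowth_of_ne_zero hj, geomGrowth_of_ne_zero (mul_ne_zero hp.ne_zero hj), mul_pow,
      ← pow_mul, mul_comm _ p, ← mul_assoc, hpow]

end GrowthFunction

section DworkExp

open PowerSeries

variable {p : ℕ} [hp : Fact p.Prime]

/-- The power series `exp(X + X ^ p / p)`, which becomes the Dwork series
`exp(π (X - X ^ p))` after the substitution `X ↦ π X`, since `π ^ p = -p π`. -/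
noncomputable def dworkExp (p : ℕ) [hp : Fact p.Prime] : ℚ_[p]⟦X⟧ :=
  exp ℚ_[p] * expand p hp.out.ne_zero (rescale (p : ℚ_[p])⁻¹ (exp ℚ_[p]))

lemma constantCoeff_dworkExp : constantCoeff (dworkExp p) = 1 := by
  simp [dworkExp, ← coeff_zero_eq_constantCoeff_apply, coeff_mul, coeff_expand, coeff_rescale]

lemma coeff_dworkExp (k : ℕ) :
    coeff k (dworkExp p) = ∑ j ∈ Finset.range (k + 1), if p * j ≤ k then
      (((k - p * j).factorial : ℚ_[p]) * (j.factorial : ℚ_[p]) * (p : ℚ_[p]) ^ j)⁻¹ else 0 := by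
  unfold dworkExp
  rw [mul_comm, coeff_mul, Finset.Nat.sum_antidiagonal_eq_sum_range_succ_mk]
  simp only [coeff_expand, ite_mul, zero_mul]
  rw [← Finset.sum_filter, ← Finset.sum_filter]
  refine (Finset.sum_bij (fun j _ ↦ p * j) (fun j hj ↦ ?_)
    (fun i _ j _ h ↦ Nat.eq_of_mul_eq_mul_left hp.out.pos h) (fun j hj ↦ ?_)
    fun j _ ↦ ?_).symm
  · simp only [Finset.mem_filter, Finset.mem_range] at hj ⊢
    exact ⟨by omega, dvd_mul_right _ _⟩
  · simp only [Finset.mem_filter, Finset.mem_range] at hj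
    obtain ⟨hk, c, rfl⟩ := hj
    have := Nat.le_mul_of_pos_left c hp.out.pos
    exact ⟨c, by simp only [Finset.mem_filter, Finset.mem_range]; omega, rfl⟩
  · rw [Nat.mul_div_cancel_left _ hp.out.pos]
    simp only [coeff_rescale, coeff_exp, one_div, map_inv₀, map_natCast]
    ring

lemma dworkExp_pow :
    dworkExp p ^ p = expand p hp.out.ne_zero (dworkExp p) *
      (rescale (p : ℚ_[p]) (exp ℚ_[p]) * expand (p * p) (mul_ne_zero hp.out.ne_zero hp.out.ne_zero)
        (rescale (-(p : ℚ_[p])⁻¹) (exp ℚ_[p]))) := by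
  have hp_ne : (p : ℚ_[p]) ≠ 0 := mod_cast hp.out.ne_zero
  have hpow : rescale (p : ℚ_[p])⁻¹ (exp ℚ_[p]) ^ p = exp ℚ_[p] := by
    rw [← map_pow, exp_pow_eq_rescale_exp, rescale_rescale, mul_inv_cancel₀ hp_ne, rescale_one,
      RingHom.id_apply]
  have hinv : rescale (p : ℚ_[p])⁻¹ (exp ℚ_[p]) * rescale (-(p : ℚ_[p])⁻¹) (exp ℚ_[p]) = 1 := by
    rw [exp_mul_exp_eq_exp_add]
    simp
  replace hinv := congrArg (expand (p * p) (mul_ne_zero hp.out.ne_zero hp.out.ne_zero)) hinv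
  rw [map_mul, map_one] at hinv
  unfold dworkExp
  rw [mul_pow, ← map_pow (expand p _), hpow, map_mul, ← expand_mul, exp_pow_eq_rescale_exp]
  linear_combination
    -(rescale (p : ℚ_[p]) (exp ℚ_[p]) * expand p hp.out.ne_zero (exp ℚ_[p])) * hinv

variable {w : ℝ}

lemma norm_coeff_rescale_exp_le (hw : 0 < w) (hwp : w ^ (p - 1) = (p : ℝ)⁻¹) (c : ℚ_[p]) {m : ℕ}
    (hm : m ≠ 0) : ‖coeff m (rescale c (exp ℚ_[p]))‖ ≤ ‖c‖ ^ m * w⁻¹ ^ (m - 1) := by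
  have hp_eq : (p : ℝ) = w⁻¹ ^ (p - 1) := by rw [inv_pow, hwp, inv_inv]
  have hw_inv : 1 ≤ w⁻¹ :=
    (one_le_pow_iff_of_nonneg (inv_nonneg.2 hw.le) (Nat.sub_ne_zero_of_lt hp.out.one_lt)).1
      (hp_eq ▸ mod_cast hp.out.one_le)
  have hfac : ‖(m.factorial : ℚ_[p])⁻¹‖ = (p : ℝ) ^ padicValNat p m.factorial := by
    rw [norm_inv, Padic.norm_eq_zpow_neg_valuation (mod_cast m.factorial_ne_zero)]
    simp
  have hval := sub_one_mul_padicValNat_factorial_lt_of_ne_zero p hm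
  rw [coeff_rescale, coeff_exp, norm_mul, norm_pow, one_div, map_inv₀, map_natCast, hfac, hp_eq,
    ← pow_mul]
  gcongr
  omega

lemma DworkGrowth.exists_eq_one_add {D : ℕ → ℝ} (hD : DworkGrowth p D) {G : ℚ_[p]⟦X⟧}
    (hG : constantCoeff G = 1) (hle : ∀ k ≠ 0, ‖coeff k G‖ ≤ (p : ℝ)⁻¹ * D k) :
    ∃ g ∈ hD.subring, G = 1 + p * g := by
  obtain ⟨g, hg, h⟩ := hD.exists_eq_natCast_mul (f := G - 1) fun k ↦ by
    rcases eq_or_ne k 0 with rfl | hk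
    · simpa [hG] using mul_nonneg (inv_nonneg.2 p.cast_nonneg) (hD.nonneg 0)
    · simpa [coeff_one, hk] using hle k hk
  exact ⟨g, hg, by rw [← h, add_sub_cancel]⟩

lemma exists_rescale_exp_eq_one_add {D : ℕ → ℝ} (hD : DworkGrowth p D) (hw : 0 < w)
    (hwp : w ^ (p - 1) = (p : ℝ)⁻¹) :
    ∃ g ∈ hD.subring, rescale (p : ℚ_[p]) (exp ℚ_[p]) = 1 + p * g := by
  have hp_pos : (0 : ℝ) < p := mod_cast hp.out.pos
  have hp_sub : p - 1 ≠ 0 := Nat.sub_ne_zero_of_lt hp.out.one_lt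
  have hp_eq : w⁻¹ ^ (p - 1) = p := by rw [inv_pow, hwp, inv_inv]
  have hw_inv : 1 ≤ w⁻¹ :=
    (one_le_pow_iff_of_nonneg (inv_nonneg.2 hw.le) hp_sub).1 (hp_eq ▸ mod_cast hp.out.one_le)
  have hw_inv_le : (p : ℝ)⁻¹ * w⁻¹ ≤ 1 :=
    (inv_mul_le_one₀ hp_pos).2 ((le_self_pow₀ hw_inv hp_sub).trans_eq hp_eq)
  refine hD.exists_eq_one_add (by simp [← coeff_zero_eq_constantCoeff_apply, coeff_rescale])
    fun k hk ↦ ?_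
  calc ‖coeff k (rescale (p : ℚ_[p]) (exp ℚ_[p]))‖
      ≤ (p : ℝ)⁻¹ ^ k * w⁻¹ ^ (k - 1) := by
        simpa using norm_coeff_rescale_exp_le hw hwp (p : ℚ_[p]) hk
    _ = (p : ℝ)⁻¹ * ((p : ℝ)⁻¹ * w⁻¹) ^ (k - 1) := by
        obtain ⟨j, rfl⟩ := Nat.exists_eq_succ_of_ne_zero hk
        rw [Nat.succ_eq_add_one, Nat.add_sub_cancel, mul_pow, pow_succ]
        ring
    _ ≤ (p : ℝ)⁻¹ * D k := by
        gcongr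
        exact (pow_le_one₀ (by positivity) hw_inv_le).trans (hD.one_le k)

lemma exists_expand_rescale_exp_eq_one_add (hw : 0 < w) (hwp : w ^ (p - 1) = (p : ℝ)⁻¹) :
    ∃ g ∈ (dworkGrowth_geomGrowth hp.out hw hwp).subring,
      expand (p * p) (mul_ne_zero hp.out.ne_zero hp.out.ne_zero)
        (rescale (-(p : ℚ_[p])⁻¹) (exp ℚ_[p])) = 1 + p * g := by
  set hD := dworkGrowth_geomGrowth hp.out hw hwp
  have hp_one : (1 : ℝ) ≤ p := mod_cast hp.out.one_le
  refine hD.exists_eq_one_add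
    (by simp [← coeff_zero_eq_constantCoeff_apply, coeff_rescale, coeff_expand]) fun k hk ↦ ?_
  rw [coeff_expand]
  split_ifs with hdvd
  swap
  · simpa using mul_nonneg (inv_nonneg.2 p.cast_nonneg) (hD.nonneg k)
  rw [← pow_two] at hdvd ⊢
  obtain ⟨m, rfl⟩ := hdvd
  have hm : m ≠ 0 := right_ne_zero_of_mul hk
  rw [Nat.mul_div_cancel_left _ (pow_pos hp.out.pos 2), geomGrowth_of_ne_zero hm]
  calc ‖coeff m (rescale (-(p : ℚ_[p])⁻¹) (exp ℚ_[p]))‖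
      ≤ (p : ℝ) ^ m * w⁻¹ ^ (m - 1) := by
        simpa using norm_coeff_rescale_exp_le hw hwp (-(p : ℚ_[p])⁻¹) hm
    _ ≤ (p : ℝ) ^ m * w⁻¹ ^ (m - 1) * p ^ (m - 1) :=
        le_mul_of_one_le_right (by positivity) (one_le_pow₀ hp_one)
    _ = (p : ℝ)⁻¹ * (w * (p ^ 2 * w⁻¹) ^ m) := by
        obtain ⟨j, rfl⟩ := Nat.exists_eq_succ_of_ne_zero hm
        rw [Nat.succ_eq_add_one, Nat.add_sub_cancel, mul_pow, pow_succ w⁻¹]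
        field_simp
        ring

theorem norm_coeff_dworkExp_le (hw : 0 < w) (hwp : w ^ (p - 1) = (p : ℝ)⁻¹) (k : ℕ) :
    ‖coeff k (dworkExp p)‖ ≤ geomGrowth w (p ^ 2 * w⁻¹) (k / p ^ 2) := by
  set hD := dworkGrowth_geomGrowth hp.out hw hwp
  obtain ⟨g, hg, hg_eq⟩ := exists_rescale_exp_eq_one_add hD hw hwp
  obtain ⟨h, hh, hh_eq⟩ := exists_expand_rescale_exp_eq_one_add hw hwp
  refine hD.mem_subring_of_pow_eq constantCoeff_dworkExp
    (add_mem (add_mem hg hh) (mul_mem (natCast_mem _ p) (mul_mem hg hh))) ?_ k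
  rw [dworkExp_pow, hg_eq, hh_eq]
  ring

end DworkExp

section DworkCoefficients

variable {p : ℕ} [hp : Fact p.Prime] {K : Type*} [NormedField K] [NormedAlgebra ℚ_[p] K]

variable (p) in
lemma norm_natCast_eq (m : ℕ) : ‖(m : K)‖ = ‖(m : ℚ_[p])‖ := by
  rw [← map_natCast (algebraMap ℚ_[p] K), norm_algebraMap']

lemma norm_prime_eq : ‖(p : K)‖ = (p : ℝ)⁻¹ := by rw [norm_natCast_eq p, Padic.norm_p]

variable (p K) in
lemma prime_ne_zero : (p : K) ≠ 0 := by
  rw [← norm_ne_zero_iff, norm_prime_eq]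
  exact inv_ne_zero (mod_cast hp.out.ne_zero)

variable (p K) in
lemma norm_prime_lt_one : ‖(p : K)‖ < 1 := by
  rw [norm_prime_eq]
  exact inv_lt_one_of_one_lt₀ (mod_cast hp.out.one_lt)

variable {π : K} (hπ : π ^ (p - 1) = -(p : K))

include hπ

lemma norm_uniformizer_pow : ‖π‖ ^ (p - 1) = (p : ℝ)⁻¹ := by
  rw [← norm_pow, hπ, norm_neg, norm_prime_eq]

lemma uniformizer_ne_zero : π ≠ 0 := by
  rintro rfl
  rw [zero_pow (Nat.sub_ne_zero_of_lt hp.out.one_lt), zero_eq_neg] at hπ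
  exact prime_ne_zero p K hπ

lemma norm_uniformizer_lt_one : ‖π‖ < 1 := by
  refine (pow_lt_one_iff_of_nonneg (norm_nonneg π) (Nat.sub_ne_zero_of_lt hp.out.one_lt)).1 ?_
  rw [norm_uniformizer_pow hπ, ← norm_prime_eq (K := K)]
  exact norm_prime_lt_one p K

lemma dworkB_eq_pow_mul_coeff (k : ℕ) :
    dworkB p π k = π ^ k * algebraMap ℚ_[p] K (PowerSeries.coeff k (dworkExp p)) := by
  rw [coeff_dworkExp, map_sum, Finset.mul_sum]
  refine Finset.sum_congr rfl fun j _ ↦ ?_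
  split_ifs with hjk
  swap
  · simp
  have hpow : π ^ k = π ^ (k - p * j + j) * (-(p : K)) ^ j := by
    rw [← hπ, ← pow_mul, ← pow_add]
    congr 1
    have : (p - 1) * j + j = p * j := by
      rw [← Nat.succ_mul, Nat.succ_eq_add_one, Nat.sub_add_cancel hp.out.one_le]
    omega
  have hp_ne : (p : K) ^ j ≠ 0 := pow_ne_zero _ (prime_ne_zero p K)
  simp only [map_inv₀, map_mul, map_natCast, map_pow]
  rw [hpow, neg_pow (p : K) j]
  field_simp

theorem norm_dworkB_le (k : ℕ) :
    ‖dworkB p π k‖ ≤ ‖π‖ ^ k * ‖π‖⁻¹ ^ ((2 * p - 1) * (k / p ^ 2)) := by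
  have hw : 0 < ‖π‖ := norm_pos_iff.2 (uniformizer_ne_zero hπ)
  have hwp := norm_uniformizer_pow hπ
  have hC : (p : ℝ) ^ 2 * ‖π‖⁻¹ = ‖π‖⁻¹ ^ (2 * p - 1) := by
    have hp_one := hp.out.one_le
    rw [show (p : ℝ) = ‖π‖⁻¹ ^ (p - 1) by rw [inv_pow, hwp, inv_inv], ← pow_mul, ← pow_succ]
    congr 1
    omega
  rw [dworkB_eq_pow_mul_coeff hπ, norm_mul, norm_pow, norm_algebraMap']
  gcongr
  refine (norm_coeff_dworkExp_le hw hwp k).trans ?_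
  rw [hC, pow_mul]
  unfold geomGrowth
  split_ifs with hk
  · simp [hk]
  · exact mul_le_of_le_one_left (by positivity) (norm_uniformizer_lt_one hπ).le

end DworkCoefficients

lemma dworkB_of_lt {p k : ℕ} (hk : k < p) {K : Type*} [Field K] (π : K) :
    dworkB p π k = π ^ k / (k.factorial : K) := by
  unfold dworkB
  rw [Finset.sum_eq_single 0]
  · simp
  · intro j _ hj
    have := Nat.le_mul_of_pos_right p (Nat.pos_of_ne_zero hj)
    rw [if_neg (by omega)]
  · simp

lemma norm_eq_of_norm_sub_lt {K : Type*} [NormedField K] [IsUltrametricDist K] {x y : K}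
    (hxy : ‖x - y‖ < ‖y‖) : ‖x‖ = ‖y‖ := by
  rw [sub_eq_add_neg, ← norm_neg y] at hxy
  exact (IsUltrametricDist.norm_eq_of_add_norm_lt_max (lt_max_of_lt_right hxy)).trans (norm_neg y)

section CoeffBound

open MvPowerSeries

/-- All coefficients of the power series `f` have norm at most `c`. -/
def CoeffBound {σ K : Type*} [NormedField K] (f : MvPowerSeries σ K) (c : ℝ) : Prop :=
  ∀ ν, ‖coeff ν f‖ ≤ c

namespace CoeffBound

variable {σ K : Type*} [NormedField K] {f g : MvPowerSeries σ K} {c d : ℝ}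

lemma nonneg (hf : CoeffBound f c) : 0 ≤ c := (norm_nonneg _).trans (hf 0)

lemma mono (hf : CoeffBound f c) (hcd : c ≤ d) : CoeffBound f d := fun ν ↦ (hf ν).trans hcd

lemma smul (hf : CoeffBound f c) (k : K) : CoeffBound (k • f) (‖k‖ * c) := fun ν ↦ by
  rw [coeff_smul, norm_mul]
  exact mul_le_mul_of_nonneg_left (hf ν) (norm_nonneg k)

lemma neg (hf : CoeffBound f c) : CoeffBound (-f) c := fun ν ↦ by
  rw [map_neg, norm_neg]
  exact hf ν

lemma expand (hf : CoeffBound f c) {p : ℕ} (hp : p ≠ 0) :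
    CoeffBound (MvPowerSeries.expand p hp f) c := fun ν ↦ by
  by_cases hν : ∀ i, p ∣ ν i
  · obtain ⟨μ, rfl⟩ : ∃ μ : σ →₀ ℕ, p • μ = ν :=
      ⟨ν.mapRange (· / p) (Nat.zero_div p), by ext i; simp [Nat.mul_div_cancel' (hν i)]⟩
    rw [coeff_expand_smul]
    exact hf μ
  · obtain ⟨i, hi⟩ := not_forall.1 hν
    rw [coeff_expand_of_not_dvd p hp f hi, norm_zero]
    exact hf.nonneg

variable [IsUltrametricDist K]

lemma add (hf : CoeffBound f c) (hg : CoeffBound g c) : CoeffBound (f + g) c := fun ν ↦ by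
  rw [map_add]
  exact (IsUltrametricDist.norm_add_le_max _ _).trans (max_le (hf ν) (hg ν))

lemma sub (hf : CoeffBound f c) (hg : CoeffBound g c) : CoeffBound (f - g) c := by
  rw [sub_eq_add_neg]
  exact hf.add hg.neg

lemma mul (hf : CoeffBound f c) (hg : CoeffBound g d) : CoeffBound (f * g) (c * d) := fun ν ↦ by
  rw [coeff_mul]
  refine IsUltrametricDist.norm_sum_le_of_forall_le_of_nonneg (mul_nonneg hf.nonneg hg.nonneg)
    fun x _ ↦ ?_
  rw [norm_mul]
  exact mul_le_mul (hf _) (hg _) (norm_nonneg _) hf.nonneg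

lemma sum {ι : Type*} {s : Finset ι} {f : ι → MvPowerSeries σ K} (hc : 0 ≤ c)
    (hf : ∀ i ∈ s, CoeffBound (f i) c) : CoeffBound (∑ i ∈ s, f i) c := fun ν ↦ by
  rw [map_sum]
  exact IsUltrametricDist.norm_sum_le_of_forall_le_of_nonneg hc fun i hi ↦ hf i hi ν

lemma inv (hf_ne : constantCoeff f ≠ 0) (hf : CoeffBound f ‖constantCoeff f‖) :
    CoeffBound f⁻¹ ‖constantCoeff f‖⁻¹ := fun ν ↦ by
  induction ν using WellFoundedLT.induction with
  | ind ν ih =>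
    rw [coeff_inv]
    split_ifs with hν
    · rw [norm_inv]
    rw [norm_mul, norm_neg, norm_inv]
    refine mul_le_of_le_one_right (by positivity) ?_
    refine IsUltrametricDist.norm_sum_le_of_forall_le_of_nonneg zero_le_one fun x _ ↦ ?_
    split_ifs with hx
    · rw [norm_mul, ← mul_inv_cancel₀ (norm_ne_zero_iff.2 hf_ne)]
      exact mul_le_mul (hf _) (ih _ hx) (norm_nonneg _) (norm_nonneg _)
    · simp

end CoeffBound

/-- `m` is the lexicographically smallest index at which `F` attains its positive maximum. -/
def IsLexPeak {σ : Type*} [LinearOrder σ] (F : (σ →₀ ℕ) → ℝ) (m : σ →₀ ℕ) : Prop :=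
  0 < F m ∧ ∀ ν, F ν ≤ F m ∧ (toLex ν < toLex m → F ν < F m)

variable {σ : Type*}

lemma exists_isLexPeak [LinearOrder σ] {F : (σ →₀ ℕ) → ℝ}
    (hF : ∀ ε > 0, {ν | ε ≤ F ν}.Finite) {ν₀ : σ →₀ ℕ} (hν₀ : 0 < F ν₀) : ∃ m, IsLexPeak F m := by
  obtain ⟨m₁, hm₁, hmax⟩ := (hF _ hν₀).toFinset.exists_max_image F ⟨ν₀, by simp⟩
  have hm₁_ge : F ν₀ ≤ F m₁ := by simpa using hm₁
  have hle : ∀ ν, F ν ≤ F m₁ := fun ν ↦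
    (le_total (F ν₀) (F ν)).elim (fun h ↦ hmax ν (by simpa using h)) fun h ↦ h.trans hm₁_ge
  have hm₁_pos : 0 < F m₁ := hν₀.trans_le hm₁_ge
  obtain ⟨m, hm, hmin⟩ := (hF _ hm₁_pos).toFinset.exists_min_image toLex ⟨m₁, by simp⟩
  have hm_eq : F m = F m₁ := le_antisymm (hle m) (by simpa using hm)
  refine ⟨m, hm_eq ▸ hm₁_pos, fun ν ↦ ⟨hm_eq ▸ hle ν, fun hlt ↦ ?_⟩⟩
  by_contra! hcon
  exact hlt.not_ge (hmin ν (by simpa [hm_eq] using hcon))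

lemma finite_setOf_le_mul_pow_degree [Finite σ] {F : (σ →₀ ℕ) → ℝ} {c : ℝ} (hF : ∀ ν, F ν ≤ c)
    {r : ℝ} (hr : 0 ≤ r) (hr_lt : r < 1) {ε : ℝ} (hε : 0 < ε) :
    {ν | ε ≤ F ν * r ^ ν.degree}.Finite := by
  have hc : 0 < max c 1 := lt_max_of_lt_right one_pos
  obtain ⟨k, hk⟩ := exists_pow_lt_of_lt_one (div_pos hε hc) hr_lt
  refine (Finsupp.finite_of_degree_le (σ := σ) k).subset fun ν hν ↦ ?_
  by_contra! hcon
  refine absurd (Set.mem_ofPred.1 hν) (not_le.2 ?_)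
  calc F ν * r ^ ν.degree ≤ max c 1 * r ^ k :=
        mul_le_mul ((hF ν).trans (le_max_left c 1))
          (pow_le_pow_of_le_one hr hr_lt.le (not_le.1 hcon).le) (pow_nonneg hr _) hc.le
    _ < ε := (lt_div_iff₀' hc).1 hk

variable {K : Type*} [NormedField K] [IsUltrametricDist K] {f g : MvPowerSeries σ K} {c d : ℝ}

lemma IsLexPeak.norm_coeff_add_mul [LinearOrder σ] {r : ℝ} (hr : 0 < r) {i j : σ →₀ ℕ}
    (hi : IsLexPeak (fun ν ↦ ‖coeff ν f‖ * r ^ ν.degree) i)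
    (hj : IsLexPeak (fun ν ↦ ‖coeff ν g‖ * r ^ ν.degree) j) :
    ‖coeff (i + j) (f * g)‖ = ‖coeff i f * coeff j g‖ := by
  refine antidiagonal_dominant (fun x : K ↦ ‖x‖) f g i j IsUltrametricDist.norm_add_le_max
    norm_mul (fun x ↦ (norm_neg x).symm) fun q hq hq_ne ↦ ?_
  rw [Finset.HasAntidiagonal.mem_antidiagonal] at hq
  have hlex : toLex q.1 < toLex i ∨ toLex q.2 < toLex j := by
    by_contra! hcon
    have hsum : toLex i + toLex j = toLex q.1 + toLex q.2 := congrArg toLex hq.symm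
    obtain ⟨hi_eq, hj_eq⟩ := (add_eq_add_iff_eq_and_eq hcon.1 hcon.2).1 hsum
    exact hq_ne (Prod.ext (toLex.injective hi_eq.symm) (toLex.injective hj_eq.symm))
  have hweighted : ‖coeff q.1 f‖ * r ^ q.1.degree * (‖coeff q.2 g‖ * r ^ q.2.degree) <
      ‖coeff i f‖ * r ^ i.degree * (‖coeff j g‖ * r ^ j.degree) := by
    rcases hlex with hlt | hlt
    · exact (mul_le_mul_of_nonneg_left (hj.2 _).1 (by positivity)).trans_lt
        (mul_lt_mul_of_pos_right ((hi.2 _).2 hlt) hj.1)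
    · exact (mul_le_mul_of_nonneg_right (hi.2 _).1 (by positivity)).trans_lt
        (mul_lt_mul_of_pos_left ((hj.2 _).2 hlt) hi.1)
  rw [mul_mul_mul_comm, ← pow_add, mul_mul_mul_comm, ← pow_add, ← map_add, ← map_add, hq]
    at hweighted
  rw [norm_mul]
  exact lt_of_mul_lt_mul_right hweighted (by positivity)

lemma CoeffBound.mul_pow_degree_le_of_mul_eq_one [Finite σ] (hf : CoeffBound f c)
    (hg : CoeffBound g d) (hfg : f * g = 1) {r : ℝ} (hr : 0 < r) (hr_lt : r < 1) (ν : σ →₀ ℕ) :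
    ‖coeff ν f‖ * r ^ ν.degree ≤ ‖constantCoeff f‖ := by
  let _ : LinearOrder σ := linearOrderOfSTO WellOrderingRel
  have hconst : constantCoeff f * constantCoeff g = 1 := by rw [← map_mul, hfg, map_one]
  obtain ⟨i, hi⟩ := exists_isLexPeak (F := fun ν ↦ ‖coeff ν f‖ * r ^ ν.degree)
    (fun ε hε ↦ finite_setOf_le_mul_pow_degree hf hr.le hr_lt hε) (ν₀ := 0)
    (by simpa using left_ne_zero_of_mul_eq_one hconst)
  obtain ⟨j, hj⟩ := exists_isLexPeak (F := fun ν ↦ ‖coeff ν g‖ * r ^ ν.degree)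
    (fun ε hε ↦ finite_setOf_le_mul_pow_degree hg hr.le hr_lt hε) (ν₀ := 0)
    (by simpa using right_ne_zero_of_mul_eq_one hconst)
  have hne : coeff i f * coeff j g ≠ 0 :=
    mul_ne_zero (norm_pos_iff.1 (pos_of_mul_pos_left hi.1 (by positivity)))
      (norm_pos_iff.1 (pos_of_mul_pos_left hj.1 (by positivity)))
  have hij : i + j = 0 := by
    by_contra hij
    have h := hi.norm_coeff_add_mul hr hj
    rw [hfg, coeff_one, if_neg hij, norm_zero] at h
    exact hne (norm_eq_zero.1 h.symm)
  obtain rfl : i = 0 := (add_eq_zero.1 hij).1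
  simpa using (hi.2 ν).1

theorem CoeffBound.of_mul_eq_one [Finite σ] (hf : CoeffBound f c) (hg : CoeffBound g d)
    (hfg : f * g = 1) : CoeffBound f ‖constantCoeff f‖ := fun ν ↦ by
  have htendsto : Filter.Tendsto (fun r : ℝ ↦ ‖coeff ν f‖ * r ^ ν.degree) (nhdsWithin 1 (Set.Iio 1))
      (nhds ‖coeff ν f‖) :=
    (Continuous.tendsto' (by fun_prop) _ _ (by simp)).mono_left nhdsWithin_le_nhds
  refine le_of_tendsto htendsto ?_
  filter_upwards [Ioo_mem_nhdsLT zero_lt_one] with r hr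
  exact hf.mul_pow_degree_le_of_mul_eq_one hg hfg hr.1 hr.2 ν

end CoeffBound

section BoundedSeries

open MvPowerSeries

variable {N : ℕ} {K : Type*} [NormedField K] {f g : MvPowerSeries (Fin N) K} {c : ℝ}

lemma CoeffBound.memR (hf : CoeffBound f c) : memR f := ⟨c, Set.forall_mem_range.2 hf⟩

lemma CoeffBound.Rnorm_le (hf : CoeffBound f c) : Rnorm f ≤ c := ciSup_le hf

lemma memR.coeffBound (hf : memR f) : CoeffBound f (Rnorm f) := le_ciSup hf

lemma CoeffBound.Rnorm_eq (hf : CoeffBound f ‖constantCoeff f‖) : Rnorm f = ‖constantCoeff f‖ :=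
  le_antisymm hf.Rnorm_le (hf.memR.coeffBound 0)

lemma invR_iff [IsUltrametricDist K] :
    invR f ↔ constantCoeff f ≠ 0 ∧ CoeffBound f ‖constantCoeff f‖ := by
  refine ⟨fun ⟨hf, g, hg, hfg⟩ ↦ ⟨?_, hf.coeffBound.of_mul_eq_one hg.coeffBound hfg⟩,
    fun ⟨hf_ne, hf⟩ ↦ ⟨hf.memR, f⁻¹, (hf.inv hf_ne).memR, MvPowerSeries.mul_inv_cancel f hf_ne⟩⟩
  exact left_ne_zero_of_mul_eq_one (b := constantCoeff g) (by rw [← map_mul, hfg, map_one])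

lemma frobR_eq_expand {K : Type*} [Field K] {p : ℕ} (hp : p ≠ 0) (f : MvPowerSeries (Fin N) K) :
    frobR p f = MvPowerSeries.expand p hp f := by
  funext ν
  change frobR p f ν = coeff ν (MvPowerSeries.expand p hp f)
  unfold frobR
  split_ifs with h
  · conv_rhs => rw [← h.choose_spec, coeff_expand_smul]
    rfl
  · obtain ⟨i, hi⟩ : ∃ i, ¬ p ∣ ν i := by
      by_contra! hdvd
      exact h ⟨ν.mapRange (· / p) (Nat.zero_div p), by ext i; simp [Nat.mul_div_cancel' (hdvd i)]⟩
    rw [coeff_expand_of_not_dvd p hp f hi]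

end BoundedSeries

section Lattice

variable {n N : ℕ} {a : Fin (N + 1) → Fin n → ℤ}

lemma hat_mem_cone (a : Fin (N + 1) → Fin n → ℤ) (j : Fin (N + 1)) :
    (fun i ↦ (hat (a j) i : ℝ)) ∈ cone a :=
  ⟨Pi.single j 1, (Pi.single_nonneg (α := fun _ ↦ ℝ)).2 zero_le_one, by
    simp [Pi.single_apply, ite_smul]⟩

lemma nonneg_of_mem_cone {ℓ : (Fin (n + 1) → ℝ) →ₗ[ℝ] ℝ}
    (hℓ : ∀ j, 0 ≤ ℓ fun i ↦ (hat (a j) i : ℝ)) {x : Fin (n + 1) → ℝ} (hx : x ∈ cone a) :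
    0 ≤ ℓ x := by
  obtain ⟨t, ht, rfl⟩ := hx
  rw [map_sum]
  refine Finset.sum_nonneg fun j _ ↦ ?_
  rw [map_smul]
  exact mul_nonneg (ht j) (hℓ j)

lemma one_le_of_mem_latticeMint {μ : Fin (n + 1) → ℤ} (hμ : μ ∈ latticeMint a) : 1 ≤ μ 0 := by
  have hcone : ∀ x ∈ cone a, 0 ≤ LinearMap.proj (R := ℝ) (φ := fun _ ↦ ℝ) 0 x := fun x hx ↦
    nonneg_of_mem_cone (fun j ↦ by simp [hat]) hx
  have hnonneg : 0 ≤ μ 0 := by simpa using hcone _ hμ.1.1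
  refine Int.add_one_le_iff.2 (hnonneg.lt_of_ne' fun h ↦ ?_)
  simpa [hat] using hμ.2 _ hcone (by simp [h]) _ (hat_mem_cone a 0)

lemma exists_clm_lt_of_notMem_interior {E : Type*} [NormedAddCommGroup E] [NormedSpace ℝ E]
    {s : Set E} (hs : Convex ℝ s) (hs_int : (interior s).Nonempty) {v : E} (hv : v ∉ interior s) :
    ∃ f : E →L[ℝ] ℝ, (∀ x ∈ interior s, f x < f v) ∧ ∀ x ∈ s, f x ≤ f v := by
  obtain ⟨f, hf⟩ := geometric_hahn_banach_open_point hs.interior isOpen_interior hv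
  refine ⟨f, hf, fun x hx ↦ ?_⟩
  have hsub : closure (interior s) ⊆ {x | f x ≤ f v} :=
    closure_minimal (fun y hy ↦ (hf y hy).le) (isClosed_le f.continuous continuous_const)
  rw [hs.closure_interior_eq_closure_of_nonempty_interior hs_int] at hsub
  exact hsub (subset_closure hx)

lemma tail_mem_interior_of_mem_latticeMint
    (ha : (fun i ↦ (a 0 i : ℝ)) ∈
      interior (convexHull ℝ (Set.range fun j : Fin N ↦ fun i ↦ (a j.succ i : ℝ))))
    {μ : Fin (n + 1) → ℤ} (hμ : μ ∈ latticeMint a) (hμ_zero : μ 0 = 1) :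
    (fun i : Fin n ↦ (μ i.succ : ℝ)) ∈
      interior (convexHull ℝ (Set.range fun j : Fin N ↦ fun i ↦ (a j.succ i : ℝ))) := by
  by_contra hcon
  obtain ⟨f, hf_int, hf⟩ := exists_clm_lt_of_notMem_interior (convex_convexHull ℝ _) ⟨_, ha⟩ hcon
  -- the homogenization of the supporting affine functional `f v - f` at `v = μ / μ 0`
  let ℓ : (Fin (n + 1) → ℝ) →ₗ[ℝ] ℝ :=
    f (fun i ↦ (μ i.succ : ℝ)) • LinearMap.proj 0 -
      f.toLinearMap.comp (LinearMap.funLeft ℝ ℝ Fin.succ)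
  have hℓ (x : Fin (n + 1) → ℝ) :
      ℓ x = f (fun i ↦ (μ i.succ : ℝ)) * x 0 - f fun i ↦ x i.succ := rfl
  have hℓ_hat (j : Fin (N + 1)) : (ℓ fun i ↦ (hat (a j) i : ℝ)) =
      f (fun i ↦ (μ i.succ : ℝ)) - f fun i ↦ (a j i : ℝ) := by
    simp [hℓ, hat]
  have hℓ_nonneg (j : Fin (N + 1)) : 0 ≤ ℓ fun i ↦ (hat (a j) i : ℝ) := by
    rw [hℓ_hat, sub_nonneg]
    refine Fin.cases (hf_int _ ha).le (fun j ↦ ?_) j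
    exact hf _ (subset_convexHull _ _ ⟨j, rfl⟩)
  have hzero := hμ.2 ℓ (fun x hx ↦ nonneg_of_mem_cone hℓ_nonneg hx) (by simp [hℓ, hμ_zero]) _
    (hat_mem_cone a 0)
  rw [hℓ_hat] at hzero
  exact (sub_pos.2 (hf_int _ ha)).ne' hzero

lemma eq_hat_of_mem_latticeMint (ha : uniqueInteriorPoint a) {μ : Fin (n + 1) → ℤ}
    (hμ : μ ∈ latticeMint a) (hμ_zero : μ 0 = 1) : μ = hat (a 0) := by
  have htail := ha.2 (fun i ↦ μ i.succ) (tail_mem_interior_of_mem_latticeMint ha.1 hμ hμ_zero)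
  rw [hat, ← hμ_zero, ← htail]
  exact (Fin.cons_self_tail μ).symm

lemma natCast_smul_sub_mem_latticeM {p : ℕ} (hp : 1 ≤ p) (a : Fin (N + 1) → Fin n → ℤ)
    (j : Fin (N + 1)) : (p : ℤ) • hat (a j) - hat (a j) ∈ latticeM a := by
  have heq : (p : ℤ) • hat (a j) - hat (a j) = ((p - 1 : ℕ) : ℤ) • hat (a j) := by
    rw [Nat.cast_sub hp, sub_smul, Nat.cast_one, one_smul]
  rw [heq]
  refine ⟨⟨Pi.single j ((p - 1 : ℕ) : ℝ),
    (Pi.single_nonneg (α := fun _ ↦ ℝ)).2 (Nat.cast_nonneg _), ?_⟩,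
    AddSubgroup.zsmul_mem _ (AddSubgroup.subset_closure (Set.mem_range_self j)) _⟩
  ext i
  rw [Finset.sum_apply, Finset.sum_eq_single_of_mem j (Finset.mem_univ j)] <;> simp +contextual

end Lattice

section BoneBound

variable {p : ℕ} [hp : Fact p.Prime] {K : Type*} [NormedField K] [NormedAlgebra ℚ_[p] K]
  {π : K}

lemma norm_prod_dworkB_le (hπ : π ^ (p - 1) = -(p : K)) {α : Type*} (s : Finset α) (k : α → ℕ) :
    ∃ m, m * p ^ 2 ≤ ∑ i ∈ s, k i ∧
      ‖∏ i ∈ s, dworkB p π (k i)‖ ≤ ‖π‖ ^ (∑ i ∈ s, k i) * ‖π‖⁻¹ ^ ((2 * p - 1) * m) := by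
  refine ⟨∑ i ∈ s, k i / p ^ 2, ?_, ?_⟩
  · rw [Finset.sum_mul]
    exact Finset.sum_le_sum fun i _ ↦ Nat.div_mul_le_self _ _
  · rw [norm_prod, ← Finset.prod_pow_eq_pow_sum, Finset.mul_sum, ← Finset.prod_pow_eq_pow_sum,
      ← Finset.prod_mul_distrib]
    exact Finset.prod_le_prod (fun i _ ↦ norm_nonneg _) fun i _ ↦ norm_dworkB_le hπ _

lemma le_exponent {p ρ ν m e : ℤ} (hp : 3 ≤ p) (hρ : 1 ≤ ρ) (hm : 0 ≤ m)
    (hm_le : m * p ^ 2 ≤ p * ν - ρ) (he : e ≤ p) (heν : e ≤ (p - 1) * ν) :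
    e ≤ (p - 1) * ν - (2 * p - 1) * m := by
  obtain rfl | hm_pos := hm.eq_or_lt
  · simpa using heν
  have hν : p * m + 1 ≤ ν := by
    have : p * (p * m) < p * ν := by linarith
    exact lt_of_mul_lt_mul_left this (by linarith)
  have hmul : (p - 1) * (p * m + 1) ≤ (p - 1) * ν := by gcongr; linarith
  nlinarith

lemma dworkWeight_le {p : ℕ} (hp3 : 3 ≤ p) {w : ℝ} (hw : 0 < w) (hw_le : w ≤ 1) {ρ ν : ℤ}
    (hρ : 1 ≤ ρ) {s m e : ℕ} (hs : (s : ℤ) = p * ν - ρ) (hm : m * p ^ 2 ≤ s) (he : e ≤ p)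
    (heν : (e : ℤ) ≤ (p - 1) * ν) :
    w ^ (ρ - ν) * (w ^ s * w⁻¹ ^ ((2 * p - 1) * m)) ≤ w ^ e := by
  have heq : w ^ (ρ - ν) * (w ^ s * w⁻¹ ^ ((2 * p - 1) * m)) =
      w ^ (((p : ℤ) - 1) * ν - (2 * p - 1) * m) := by
    rw [inv_pow, ← zpow_natCast w s, ← zpow_natCast w ((2 * p - 1) * m), ← zpow_neg,
      ← zpow_add₀ hw.ne', ← zpow_add₀ hw.ne', hs]
    push_cast [show 1 ≤ 2 * p by omega]
    ring_nf
  rw [heq, ← zpow_natCast w e]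
  exact zpow_le_zpow_right_of_le_one₀ hw hw_le <| le_exponent (mod_cast hp3) hρ (by positivity)
    (hs ▸ mod_cast hm) (mod_cast he) heν

variable {n N : ℕ} {a : Fin (N + 1) → Fin n → ℤ}

lemma exists_norm_coeff_Bone_le (hπ : π ^ (p - 1) = -(p : K)) (μ : Fin (n + 1) → ℤ)
    (l : Fin N →₀ ℕ) : MvPowerSeries.coeff l (Bone p a π μ) = 0 ∨
      ∃ s m : ℕ, (s : ℤ) = μ 0 ∧ m * p ^ 2 ≤ s ∧
        ‖MvPowerSeries.coeff l (Bone p a π μ)‖ ≤ ‖π‖ ^ s * ‖π‖⁻¹ ^ ((2 * p - 1) * m) := by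
  change Bone p a π μ l = 0 ∨ ∃ s m : ℕ, (s : ℤ) = μ 0 ∧ m * p ^ 2 ≤ s ∧ ‖Bone p a π μ l‖ ≤ _
  unfold Bone
  split_ifs with h
  swap
  · exact Or.inl rfl
  let k : Fin (N + 1) → ℕ := Fin.cons (μ 0 - ∑ i : Fin N, (l i : ℤ)).toNat l
  have hprod : dworkB p π (μ 0 - ∑ i : Fin N, (l i : ℤ)).toNat * ∏ i : Fin N, dworkB p π (l i) =
      ∏ i, dworkB p π (k i) := by
    rw [Fin.prod_univ_succ]
    rfl
  have hsum : ((∑ i, k i : ℕ) : ℤ) = μ 0 := by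
    rw [Fin.sum_univ_succ]
    simp [k, Int.toNat_of_nonneg h.1]
  obtain ⟨m, hm, hle⟩ := norm_prod_dworkB_le hπ Finset.univ k
  exact Or.inr ⟨_, m, hsum, hm, hprod ▸ hle⟩

lemma coeffBound_smul_Bone (hπ : π ^ (p - 1) = -(p : K)) (hp3 : 3 ≤ p) {ρ ν : Fin (n + 1) → ℤ}
    (hρ : 1 ≤ ρ 0) {e : ℕ} (he : e ≤ p) (heν : (e : ℤ) ≤ (p - 1) * ν 0) :
    CoeffBound (π ^ (ρ 0 - ν 0) • Bone p a π ((p : ℤ) • ν - ρ)) (‖π‖ ^ e) := fun l ↦ by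
  have hπ_pos : 0 < ‖π‖ := norm_pos_iff.2 (uniformizer_ne_zero hπ)
  rw [MvPowerSeries.coeff_smul, norm_mul, norm_zpow]
  obtain h | ⟨s, m, hs, hm, hle⟩ := exists_norm_coeff_Bone_le (a := a) hπ ((p : ℤ) • ν - ρ) l
  · rw [h, norm_zero, mul_zero]
    positivity
  · exact (mul_le_mul_of_nonneg_left hle (by positivity)).trans <|
      dworkWeight_le hp3 hπ_pos (norm_uniformizer_lt_one hπ).le hρ (by simpa using hs) hm he heν

end BoneBound

section BoneCongruence

open MvPowerSeries

lemma factorial_mul_factorial_mul_neg_one_pow (p : ℕ) [Fact p.Prime] {m : ℕ} (hm : m ≤ p - 1) :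
    ((m.factorial * (p - 1 - m).factorial : ℕ) : ZMod p) * (-1) ^ m = -1 := by
  induction m with
  | zero => simp [ZMod.wilsons_lemma p]
  | succ m ih =>
    have hneg : ((p - 1 - (m + 1) + 1 : ℕ) : ZMod p) = -((m + 1 : ℕ) : ZMod p) := by
      rw [eq_neg_iff_add_eq_zero, ← Nat.cast_add, show p - 1 - (m + 1) + 1 + (m + 1) = p by omega,
        ZMod.natCast_self]
    have hsub : p - 1 - m = p - 1 - (m + 1) + 1 := by omega
    have ih := ih (by omega)
    rw [hsub, Nat.factorial_succ, Nat.cast_mul, Nat.cast_mul, hneg] at ih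
    rw [Nat.factorial_succ, Nat.cast_mul, Nat.cast_mul]
    linear_combination ih

lemma dvd_one_add_factorial_mul_factorial (p : ℕ) [Fact p.Prime] {m : ℕ} (hm : m ≤ p - 1) :
    (p : ℤ) ∣ 1 + (m.factorial * (p - 1 - m).factorial : ℕ) * (-1) ^ m := by
  have hwilson := factorial_mul_factorial_mul_neg_one_pow p hm
  rw [← ZMod.intCast_zmod_eq_zero_iff_dvd]
  push_cast at hwilson ⊢
  rw [hwilson, add_neg_cancel]

variable {p : ℕ} [hp : Fact p.Prime]

section Norms

variable {K : Type*} [NormedField K] [NormedAlgebra ℚ_[p] K]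

variable (p K) in
lemma norm_factorial_eq_one {k : ℕ} (hk : k < p) : ‖(k.factorial : K)‖ = 1 := by
  rw [norm_natCast_eq p, Padic.norm_natCast_eq_one_iff, Nat.Prime.coprime_iff_not_dvd hp.out,
    Nat.Prime.dvd_factorial hp.out]
  exact hk.not_ge

variable (K) in
lemma norm_intCast_le_inv_of_dvd [IsUltrametricDist K] {z : ℤ} (hz : (p : ℤ) ∣ z) :
    ‖(z : K)‖ ≤ (p : ℝ)⁻¹ := by
  obtain ⟨w, rfl⟩ := hz
  rw [Int.cast_mul, Int.cast_natCast, norm_mul, norm_prime_eq]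
  exact mul_le_of_le_one_right (by positivity) (IsUltrametricDist.norm_intCast_le_one K w)

end Norms

variable {n N : ℕ} {a : Fin (N + 1) → Fin n → ℤ}

lemma Bone_support_iff (l : Fin N →₀ ℕ) :
    (0 ≤ ((p : ℤ) • hat (a 0) - hat (a 0)) 0 - ∑ i : Fin N, (l i : ℤ) ∧
      (((p : ℤ) • hat (a 0) - hat (a 0)) 0 - ∑ i : Fin N, (l i : ℤ)) • hat (a 0) +
        ∑ i : Fin N, (l i : ℤ) • hat (a i.succ) = (p : ℤ) • hat (a 0) - hat (a 0)) ↔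
      ⇑l ∈ LplusSet a ∧ ∑ i : Fin N, l i ≤ p - 1 := by
  have hp_one := hp.out.one_le
  have hzero : ((p : ℤ) • hat (a 0) - hat (a 0)) 0 = (p : ℤ) - 1 := by simp [hat]
  have hcast : ∑ i : Fin N, (l i : ℤ) = ((∑ i : Fin N, l i : ℕ) : ℤ) := (Nat.cast_sum _ _).symm
  rw [hzero, hcast, and_comm]
  refine and_congr ?_ (by omega)
  rw [LplusSet, Set.mem_ofPred_eq, sub_smul, sub_smul, one_smul, sub_add_eq_add_sub,
    sub_eq_iff_eq_add]
  simp only [natCast_zsmul, add_right_inj]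

lemma coeff_Bone_sub_self {K : Type*} [Field K] (π : K) (l : Fin N →₀ ℕ) :
    coeff l (Bone p a π ((p : ℤ) • hat (a 0) - hat (a 0))) =
      if ⇑l ∈ LplusSet a ∧ ∑ i : Fin N, l i ≤ p - 1 then
        π ^ (p - 1) / ((p - 1 - ∑ i, l i).factorial * ∏ i, ((l i).factorial : K))
      else 0 := by
  change Bone p a π _ l = _
  simp only [Bone, Bone_support_iff]
  refine ite_congr rfl (fun h ↦ ?_) fun _ ↦ rfl
  have hp_one := hp.out.one_le
  have hle (i : Fin N) : l i ≤ ∑ i, l i := Finset.single_le_sum_of_canonicallyOrdered (by simp)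
  have htoNat : (((p : ℤ) • hat (a 0) - hat (a 0)) 0 - ∑ i : Fin N, (l i : ℤ)).toNat =
      p - 1 - ∑ i, l i := by
    have hzero : ((p : ℤ) • hat (a 0) - hat (a 0)) 0 = (p : ℤ) - 1 := by simp [hat]
    rw [hzero, ← Nat.cast_sum]
    omega
  have hb (i : Fin N) : dworkB p π (l i) = π ^ l i / ((l i).factorial : K) :=
    dworkB_of_lt (by have := hle i; omega) π
  rw [htoNat, dworkB_of_lt (by omega), Finset.prod_congr rfl fun i _ ↦ hb i,
    Finset.prod_div_distrib, Finset.prod_pow_eq_pow_sum, div_mul_div_comm, ← pow_add,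
    Nat.sub_add_cancel h.2]

lemma constantCoeff_Phi1Series {p : ℕ} {K : Type*} [Field K] :
    constantCoeff (Phi1Series p a K) = 1 := by
  change Phi1Series p a K 0 = 1
  simp [Phi1Series, LplusSet, Nat.multinomial]

lemma coeffBound_Phi1Series {p : ℕ} {K : Type*} [NormedField K] [IsUltrametricDist K] :
    CoeffBound (Phi1Series p a K) 1 := fun l ↦ by
  change ‖Phi1Series p a K l‖ ≤ 1
  unfold Phi1Series
  split_ifs
  · simpa using IsUltrametricDist.norm_natCast_le_one K (Nat.multinomial Finset.univ l)
  · simp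

lemma cast_multinomial_eq_div {α : Type*} {L : Type*} [Field L] [CharZero L] (s : Finset α)
    (l : α → ℕ) : (Nat.multinomial s l : L) =
      ((∑ i ∈ s, l i).factorial : L) / ∏ i ∈ s, ((l i).factorial : L) := by
  rw [eq_div_iff (Finset.prod_ne_zero_iff.2 fun i _ ↦ mod_cast (l i).factorial_ne_zero), mul_comm]
  exact mod_cast Nat.multinomial_spec s l

variable {K : Type*} [NormedField K] [NormedAlgebra ℚ_[p] K] [IsUltrametricDist K] {π : K}

theorem coeffBound_Bone_sub_smul_Phi1Series (hπ : π ^ (p - 1) = -(p : K)) :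
    CoeffBound (Bone p a π ((p : ℤ) • hat (a 0) - hat (a 0)) - (p : K) • Phi1Series p a K)
      ((p : ℝ)⁻¹ * (p : ℝ)⁻¹) := fun l ↦ by
  have : CharZero K := charZero_of_injective_algebraMap (algebraMap ℚ_[p] K).injective
  have hp_one := hp.out.one_le
  rw [map_sub, coeff_smul, coeff_Bone_sub_self, hπ]
  change ‖_ - _ * Phi1Series p a K l‖ ≤ _
  unfold Phi1Series
  split_ifs with h
  swap
  · simp only [mul_zero, sub_zero, norm_zero]
    positivity
  have hle (i : Fin N) : l i ≤ ∑ i, l i := Finset.single_le_sum_of_canonicallyOrdered (by simp)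
  rw [cast_multinomial_eq_div]
  set m := ∑ i, l i
  set q : K := ∏ i, ((l i).factorial : K)
  set r : K := ((p - 1 - m).factorial : K) with hr
  have hq_norm : ‖q‖ = 1 := by
    rw [norm_prod]
    exact Finset.prod_eq_one fun i _ ↦ norm_factorial_eq_one p K (by have := hle i; omega)
  have hr_norm : ‖r‖ = 1 := norm_factorial_eq_one p K (by omega)
  have hq : q ≠ 0 := norm_pos_iff.1 (hq_norm ▸ one_pos)
  have hr_ne : r ≠ 0 := norm_pos_iff.1 (hr_norm ▸ one_pos)
  have hfactor : -(p : K) / (r * q) - p * ((-1) ^ m * (m.factorial / q)) = -p * (r⁻¹ * q⁻¹) *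
      ((1 + (m.factorial * (p - 1 - m).factorial : ℕ) * (-1) ^ m : ℤ) : K) := by
    push_cast
    rw [← hr]
    field_simp
    ring
  rw [hfactor, norm_mul, norm_mul, norm_mul, norm_neg, norm_inv, norm_inv, hq_norm, hr_norm,
    norm_prime_eq, inv_one, mul_one, mul_one]
  exact mul_le_mul_of_nonneg_left (norm_intCast_le_inv_of_dvd K
    (dvd_one_add_factorial_mul_factorial p h.2)) (by positivity)

end BoneCongruence

section Eta

open MvPowerSeries

variable {n N : ℕ} {a : Fin (N + 1) → Fin n → ℤ} {K : Type*} [NormedField K]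

lemma memS.coeffBound {ξ : Msub a → MvPowerSeries (Fin N) K} (hξ : memS a ξ) (μ : Msub a) :
    CoeffBound (ξ μ) (Snorm a ξ) := by
  obtain ⟨C, hC⟩ := hξ
  have hξC : ∀ μ, CoeffBound (ξ μ) C := fun μ ν ↦ hC ⟨(μ, ν), rfl⟩
  exact (hξC μ).memR.coeffBound.mono <|
    le_ciSup (f := fun μ ↦ Rnorm (ξ μ)) ⟨C, Set.forall_mem_range.2 fun μ ↦ (hξC μ).Rnorm_le⟩ μ

lemma CoeffBound.Snorm_eq {ξ : Msub a → MvPowerSeries (Fin N) K} {μ₀ : Msub a}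
    (hξ : ∀ μ, CoeffBound (ξ μ) (Rnorm (ξ μ₀))) : Snorm a ξ = Rnorm (ξ μ₀) :=
  have : Nonempty (Msub a) := ⟨μ₀⟩
  le_antisymm (ciSup_le fun μ ↦ (hξ μ).Rnorm_le) <|
    le_ciSup (f := fun μ ↦ Rnorm (ξ μ)) ⟨_, Set.forall_mem_range.2 fun μ ↦ (hξ μ).Rnorm_le⟩ μ₀

variable [IsUltrametricDist K]

lemma norm_sub_sum_le_of_hasSum {ι : Type*} {f : ι → K} {A : K} (h : HasSum f A) (s : Finset ι)
    {c : ℝ} (hc : 0 ≤ c) (hf : ∀ i ∉ s, ‖f i‖ ≤ c) : ‖A - ∑ i ∈ s, f i‖ ≤ c := by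
  have htendsto : Filter.Tendsto (fun t ↦ ‖∑ i ∈ t, f i - ∑ i ∈ s, f i‖) Filter.atTop
      (nhds ‖A - ∑ i ∈ s, f i‖) := (Filter.Tendsto.sub_const h _).norm
  refine le_of_tendsto htendsto ?_
  filter_upwards [Filter.eventually_ge_atTop s] with t ht
  rw [← Finset.sum_sdiff ht, add_sub_cancel_right]
  exact IsUltrametricDist.norm_sum_le_of_forall_le_of_nonneg hc fun i hi ↦
    hf i (Finset.mem_sdiff.1 hi).2

variable {ι : Type*} {f : ι → MvPowerSeries (Fin N) K} {g : MvPowerSeries (Fin N) K} {c d : ℝ}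

lemma memR.sub_sum (hg : memR g) (hf : ∀ i, CoeffBound (f i) d) (s : Finset ι) :
    memR (g - ∑ i ∈ s, f i) :=
  ((hg.coeffBound.mono (le_max_left _ (max d 0))).sub <|
    CoeffBound.sum (le_max_of_le_right (le_max_right d 0))
      fun i _ ↦ (hf i).mono (le_max_of_le_right (le_max_left d 0))).memR

lemma HasSumR.hasSum_coeff (h : HasSumR f g) (hf : ∀ i, CoeffBound (f i) d) (hg : memR g)
    (ν : Fin N →₀ ℕ) : HasSum (fun i ↦ coeff ν (f i)) (coeff ν g) := by
  refine tendsto_iff_norm_sub_tendsto_zero.2 <|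
    squeeze_zero (fun _ ↦ norm_nonneg _) (fun s ↦ ?_) h
  rw [norm_sub_rev, ← map_sum, ← map_sub]
  exact (hg.sub_sum hf s).coeffBound ν

lemma HasSumR.coeffBound_sub_sum (h : HasSumR f g) (hf : ∀ i, CoeffBound (f i) d) (hg : memR g)
    {s : Finset ι} (hc : 0 ≤ c) (hs : ∀ i ∉ s, CoeffBound (f i) c) :
    CoeffBound (g - ∑ i ∈ s, f i) c := fun ν ↦ by
  rw [map_sub, map_sum]
  exact norm_sub_sum_le_of_hasSum (h.hasSum_coeff hf hg ν) s hc fun i hi ↦ hs i hi ν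

variable {p : ℕ} [hp : Fact p.Prime] [NormedAlgebra ℚ_[p] K] {π : K}
  {ξ η : Msub a → MvPowerSeries (Fin N) K} {X : ℝ}

lemma coeffBound_etaTerm (hπ : π ^ (p - 1) = -(p : K)) (hp3 : 3 ≤ p) {ρ ν : Msub a}
    (hξ : CoeffBound (ξ ν) X) {e : ℕ} (he : e ≤ p) (heν : (e : ℤ) ≤ (p - 1) * ν.1 0) :
    CoeffBound (etaTerm p a π ξ ρ.1 ν) (‖π‖ ^ e * X) := by
  unfold etaTerm
  split_ifs
  · rw [← smul_mul_assoc, frobR_eq_expand hp.out.ne_zero]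
    exact (coeffBound_smul_Bone hπ hp3 (one_le_of_mem_latticeMint ρ.2) he heν).mul (hξ.expand _)
  · have := hξ.nonneg
    exact fun _ ↦ by rw [map_zero, norm_zero]; positivity

lemma coeffBound_etaTerm_sub_one (hπ : π ^ (p - 1) = -(p : K)) (hp3 : 3 ≤ p)
    (hξ : ∀ μ, CoeffBound (ξ μ) X) (ρ ν : Msub a) :
    CoeffBound (etaTerm p a π ξ ρ.1 ν) ((p : ℝ)⁻¹ * X) := by
  rw [← norm_uniformizer_pow hπ]
  refine coeffBound_etaTerm hπ hp3 (hξ ν) (Nat.sub_le p 1) ?_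
  have hp_one : (1 : ℤ) ≤ p := mod_cast hp.out.one_le
  rw [Nat.cast_sub hp.out.one_le, Nat.cast_one]
  exact le_mul_of_one_le_right (sub_nonneg.2 hp_one) (one_le_of_mem_latticeMint ν.2)

lemma coeffBound_eta (hπ : π ^ (p - 1) = -(p : K)) (hp3 : 3 ≤ p)
    (hξ : ∀ μ, CoeffBound (ξ μ) X) {ρ : Msub a} (hη : HasSumR (etaTerm p a π ξ ρ.1) (η ρ))
    (hηR : memR (η ρ)) : CoeffBound (η ρ) ((p : ℝ)⁻¹ * X) := by
  have hterm := coeffBound_etaTerm_sub_one hπ hp3 hξ ρ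
  simpa using hη.coeffBound_sub_sum (s := ∅) hterm hηR (hterm ρ).nonneg fun ν _ ↦ hterm ν

theorem coeffBound_eta_sub_mul_frobR (hπ : π ^ (p - 1) = -(p : K)) (hp3 : 3 ≤ p)
    (ha : uniqueInteriorPoint a) {μ₀ : Msub a} (hμ₀ : μ₀.1 = hat (a 0))
    (hξ : ∀ μ, CoeffBound (ξ μ) X) (hη : HasSumR (etaTerm p a π ξ μ₀.1) (η μ₀))
    (hηR : memR (η μ₀)) :
    CoeffBound (η μ₀ - ((p : K) • Phi1Series p a K) * frobR p (ξ μ₀)) (‖π‖ ^ p * X) := by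
  have hX : 0 ≤ X := (hξ μ₀).nonneg
  have hrest : CoeffBound (η μ₀ - etaTerm p a π ξ μ₀.1 μ₀) (‖π‖ ^ p * X) := by
    rw [← Finset.sum_singleton (etaTerm p a π ξ μ₀.1) μ₀]
    refine hη.coeffBound_sub_sum (coeffBound_etaTerm_sub_one hπ hp3 hξ μ₀) hηR (by positivity)
      fun ν hν ↦ coeffBound_etaTerm hπ hp3 (hξ ν) le_rfl ?_
    have htwo : 2 ≤ ν.1 0 := (one_le_of_mem_latticeMint ν.2).lt_of_ne' fun h ↦ hν <|
      Finset.mem_singleton.2 <| Subtype.ext <|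
        (eq_hat_of_mem_latticeMint ha ν.2 h).trans hμ₀.symm
    have : (3 : ℤ) ≤ p := mod_cast hp3
    nlinarith
  have hmain : etaTerm p a π ξ μ₀.1 μ₀ =
      Bone p a π ((p : ℤ) • hat (a 0) - hat (a 0)) * frobR p (ξ μ₀) := by
    rw [etaTerm, hμ₀, if_pos (natCast_smul_sub_mem_latticeM hp.out.one_le a 0), sub_self, zpow_zero,
      one_smul]
  have hpow : (p : ℝ)⁻¹ * (p : ℝ)⁻¹ ≤ ‖π‖ ^ p := by
    rw [← norm_uniformizer_pow hπ, ← pow_add]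
    exact pow_le_pow_of_le_one (norm_nonneg π) (norm_uniformizer_lt_one hπ).le (by omega)
  have hcong := ((coeffBound_Bone_sub_smul_Phi1Series (a := a) hπ).mono hpow).mul
    ((hξ μ₀).expand hp.out.ne_zero)
  rw [← frobR_eq_expand, sub_mul, ← hmain] at hcong
  simpa only [sub_add_sub_cancel] using hrest.add hcong

lemma norm_constantCoeff_eq_of_coeffBound_sub (hπ : π ^ (p - 1) = -(p : K))
    {f η : MvPowerSeries (Fin N) K} (hf : constantCoeff f ≠ 0)
    (hη : CoeffBound (η - ((p : K) • Phi1Series p a K) * frobR p f) (‖π‖ ^ p * ‖constantCoeff f‖)) :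
    ‖constantCoeff η‖ = (p : ℝ)⁻¹ * ‖constantCoeff f‖ := by
  have hmain : ‖constantCoeff (((p : K) • Phi1Series p a K) * frobR p f)‖ =
      (p : ℝ)⁻¹ * ‖constantCoeff f‖ := by
    rw [map_mul, smul_eq_C_mul, map_mul, constantCoeff_C, constantCoeff_Phi1Series,
      frobR_eq_expand hp.out.ne_zero, constantCoeff_expand, mul_one, norm_mul, norm_prime_eq]
  rw [← hmain]
  refine norm_eq_of_norm_sub_lt ?_
  rw [← map_sub, hmain, ← norm_uniformizer_pow hπ]
  refine (hη 0).trans_lt (mul_lt_mul_of_pos_right ?_ (norm_pos_iff.2 hf))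
  exact pow_lt_pow_right_of_lt_one₀ (norm_pos_iff.2 (uniformizer_ne_zero hπ))
    (norm_uniformizer_lt_one hπ) (Nat.sub_lt hp.out.pos one_pos)

end Eta

section Residue

open IsLocalRing MvPolynomial

variable (K : Type*) [NormedField K] [IsUltrametricDist K]

/-- The ring of integers `{x | ‖x‖ ≤ 1}` of an ultrametric field. -/
noncomputable abbrev integers : ValuationSubring K :=
  (NormedField.valuation (K := K)).valuationSubring

variable {K} {σ : Type*}

lemma norm_sub_le_max (x y : K) : ‖x - y‖ ≤ max ‖x‖ ‖y‖ := by
  simpa [sub_eq_add_neg] using IsUltrametricDist.norm_add_le_max x (-y)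

lemma residue_eq_zero_iff (x : integers K) : residue (integers K) x = 0 ↔ ‖(x : K)‖ < 1 :=
  (IsLocalRing.residue_eq_zero_iff x).trans (NormedField.valuation (K := K)).mem_maximalIdeal_iff

lemma residue_ne_zero_iff (x : integers K) : residue (integers K) x ≠ 0 ↔ ‖(x : K)‖ = 1 := by
  rw [Ne, residue_eq_zero_iff, not_lt]
  exact ⟨(le_antisymm x.2 ·), ge_of_eq⟩

lemma residue_eq_residue_iff (x y : integers K) :
    residue (integers K) x = residue (integers K) y ↔ ‖(x - y : K)‖ < 1 := by
  rw [← sub_eq_zero, ← map_sub, residue_eq_zero_iff, AddSubgroupClass.coe_sub]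

/- A root of `X ^ q - X - 1` in `K` reduces to an element outside the field with `q` elements. -/
instance infinite_residueField [IsAlgClosed K] : Infinite (ResidueField (integers K)) := by
  rw [← not_finite_iff_infinite]
  intro hfinite
  have := Fintype.ofFinite (ResidueField (integers K))
  set q := Fintype.card (ResidueField (integers K))
  have hq : 1 < q := Fintype.one_lt_card
  obtain ⟨x, hx⟩ := IsAlgClosed.exists_root
    (Polynomial.X ^ q - Polynomial.X - Polynomial.C 1 : Polynomial K) <|
    Polynomial.degree_ne_of_natDegree_ne <| by
      rw [Polynomial.natDegree_sub_C, FiniteField.X_pow_card_sub_X_natDegree_eq K hq]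
      exact (zero_lt_one.trans hq).ne'
  replace hx : x ^ q = x + 1 := by simpa [sub_sub, sub_eq_zero] using hx
  have hx_le : ‖x‖ ≤ 1 := by
    by_contra! hx_lt
    have hle : ‖x + 1‖ ≤ ‖x‖ :=
      (IsUltrametricDist.norm_add_le_max x 1).trans (max_le le_rfl (by simpa using hx_lt.le))
    rw [← hx, norm_pow] at hle
    exact hle.not_gt (lt_self_pow₀ hx_lt hq)
  have hres : residue (integers K) (⟨x, hx_le⟩ ^ q) = residue (integers K) (⟨x, hx_le⟩ + 1) :=
    congrArg _ (Subtype.ext hx)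
  rw [map_pow, FiniteField.pow_card, map_add, map_one, left_eq_add] at hres
  exact one_ne_zero hres

lemma exists_map_subtype_eq {P : MvPolynomial σ K} (hP : ∀ ν, ‖P.coeff ν‖ ≤ 1) :
    ∃ Q : MvPolynomial σ (integers K), map (integers K).subtype Q = P :=
  mem_range_map_iff_coeffs_subset.2 fun c hc ↦ by
    obtain ⟨ν, -, rfl⟩ := mem_coeffs_iff.1 hc
    exact ⟨⟨P.coeff ν, hP ν⟩, rfl⟩

lemma norm_eval_map_subtype_eq_one_iff (Q : MvPolynomial σ (integers K)) (y : σ → integers K) :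
    ‖eval (fun i ↦ (y i : K)) (map (integers K).subtype Q)‖ = 1 ↔
      eval (fun i ↦ residue (integers K) (y i)) (map (residue (integers K)) Q) ≠ 0 := by
  have hreduce := map_eval (residue (integers K)) y Q
  have hcoe := map_eval (integers K).subtype y Q
  simp only [Function.comp_def] at hreduce hcoe
  rw [← hreduce, residue_ne_zero_iff, ← ValuationSubring.subtype_apply, hcoe]
  rfl

lemma norm_eval_le {P : MvPolynomial σ K} {y : σ → K} {c : ℝ} (hc : 0 ≤ c)
    (hP : ∀ ν, ‖P.coeff ν‖ ≤ c) (hy : ∀ i, ‖y i‖ ≤ 1) : ‖eval y P‖ ≤ c := by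
  rw [eval_eq]
  refine IsUltrametricDist.norm_sum_le_of_forall_le_of_nonneg hc fun ν _ ↦ ?_
  rw [norm_mul, norm_prod]
  refine (mul_le_of_le_one_right (norm_nonneg _) ?_).trans (hP ν)
  refine Finset.prod_le_one (fun _ _ ↦ norm_nonneg _) fun i _ ↦ ?_
  rw [norm_pow]
  exact pow_le_one₀ (norm_nonneg _) (hy i)

theorem exists_norm_coeff_le_norm_eval [IsAlgClosed K] (P : MvPolynomial σ K) :
    ∃ z : σ → K, (∀ i, ‖z i‖ ≤ 1) ∧ ∀ ν, ‖P.coeff ν‖ ≤ ‖eval z P‖ := by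
  obtain rfl | hP := eq_or_ne P 0
  · exact ⟨0, by simp, by simp⟩
  obtain ⟨μ, hμ, hmax⟩ := P.support.exists_max_image (‖P.coeff ·‖) (support_nonempty.2 hP)
  have hle : ∀ ν, ‖P.coeff ν‖ ≤ ‖P.coeff μ‖ := fun ν ↦ by
    by_cases hν : ν ∈ P.support
    · exact hmax ν hν
    · simp [notMem_support_iff.1 hν]
  have hμ : 0 < ‖P.coeff μ‖ := norm_pos_iff.2 (mem_support_iff.1 hμ)
  obtain ⟨Q, hQ⟩ := exists_map_subtype_eq (P := (P.coeff μ)⁻¹ • P) fun ν ↦ by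
    rw [coeff_smul, smul_eq_mul, norm_mul, norm_inv]
    exact inv_mul_le_one_of_le₀ (hle ν) hμ.le
  have hQμ : map (residue (integers K)) Q ≠ 0 := ne_of_apply_ne (coeff μ) <| by
    rw [coeff_map, coeff_zero, residue_ne_zero_iff, ← ValuationSubring.subtype_apply, ← coeff_map,
      hQ, coeff_smul, smul_eq_mul, inv_mul_cancel₀ (norm_pos_iff.1 hμ), norm_one]
  obtain ⟨y, hy⟩ : ∃ y, eval y (map (residue (integers K)) Q) ≠ 0 := by
    contrapose! hQμ
    exact funext fun y ↦ by rw [hQμ, map_zero]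
  choose z hz using fun i ↦ residue_surjective (y i)
  obtain rfl : (fun i ↦ residue (integers K) (z i)) = y := _root_.funext hz
  refine ⟨fun i ↦ z i, fun i ↦ (z i).2, fun ν ↦ (hle ν).trans_eq ?_⟩
  rw [← norm_eval_map_subtype_eq_one_iff, hQ, smul_eval, norm_mul, norm_inv] at hy
  exact (inv_mul_eq_one₀ hμ.ne').1 hy

/-- The points of the closed unit polydisk at which `Φ` takes a value of norm `1`; for `Φ = Φ_1`
this is `𝒟_+` in the coordinates `λ_i / λ_0`. -/
def unitLocus (Φ : MvPolynomial σ K) : Set (σ → K) :=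
  {y | (∀ i, ‖y i‖ ≤ 1) ∧ ‖eval y Φ‖ = 1}

variable {Φ : MvPolynomial σ K}

lemma mem_unitLocus_of_norm_sub_lt_one (hΦ : ∀ ν, ‖Φ.coeff ν‖ ≤ 1) {x y : σ → K}
    (hx : x ∈ unitLocus Φ) (hy : ∀ i, ‖y i - x i‖ < 1) : y ∈ unitLocus Φ := by
  have hy_le : ∀ i, ‖y i‖ ≤ 1 := fun i ↦ by
    simpa using (IsUltrametricDist.norm_add_le_max (y i - x i) (x i)).trans
      (max_le (hy i).le (hx.1 i))
  obtain ⟨Q, rfl⟩ := exists_map_subtype_eq hΦ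
  lift x to σ → integers K using hx.1
  lift y to σ → integers K using hy_le
  have hres : (fun i ↦ residue (integers K) (y i)) = fun i ↦ residue (integers K) (x i) :=
    _root_.funext fun i ↦ (residue_eq_residue_iff _ _).2 (hy i)
  refine ⟨fun i ↦ (y i).2, ?_⟩
  rw [norm_eval_map_subtype_eq_one_iff, hres, ← norm_eval_map_subtype_eq_one_iff]
  exact hx.2

lemma mem_unitLocus_of_norm_lt_one (hΦ : ∀ ν, ‖Φ.coeff ν‖ ≤ 1) (hΦ₀ : Φ.coeff 0 = 1) {y : σ → K}
    (hy : ∀ i, ‖y i‖ < 1) : y ∈ unitLocus Φ := by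
  have hzero : (0 : σ → K) ∈ unitLocus Φ := by
    refine ⟨by simp, ?_⟩
    rw [eval_zero, constantCoeff_eq, hΦ₀, norm_one]
  exact mem_unitLocus_of_norm_sub_lt_one hΦ hzero (by simpa using hy)

lemma pow_mem_unitLocus {p : ℕ} [Fact p.Prime] (hp : ‖(p : K)‖ < 1) (Q : MvPolynomial σ ℤ)
    {y : σ → K} (hy : y ∈ unitLocus (map (Int.castRingHom K) Q)) :
    y ^ p ∈ unitLocus (map (Int.castRingHom K) Q) := by
  obtain ⟨hy_le, hy_eval⟩ := hy
  have : CharP (ResidueField (integers K)) p := (CharP.charP_iff_prime_eq_zero Fact.out).2 <| by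
    rw [← map_natCast (residue (integers K)), residue_eq_zero_iff]
    exact_mod_cast hp
  refine ⟨fun i ↦ by simpa using pow_le_one₀ (norm_nonneg _) (hy_le i), ?_⟩
  lift y to σ → integers K using hy_le
  have hQ : map (Int.castRingHom K) Q =
      map (integers K).subtype (map (Int.castRingHom (integers K)) Q) := by
    rw [map_map, RingHom.ext_int ((integers K).subtype.comp _) (Int.castRingHom K)]
  have hpow : ((fun i ↦ (y i : K)) ^ p : σ → K) = fun i ↦ ((y i ^ p : integers K) : K) := rfl
  rw [hQ, norm_eval_map_subtype_eq_one_iff] at hy_eval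
  rw [hQ, hpow, norm_eval_map_subtype_eq_one_iff]
  have hfrob := map_eval (frobenius (ResidueField (integers K)) p)
    (fun i ↦ residue (integers K) (y i)) (map (Int.castRingHom _) Q)
  rw [map_map, RingHom.ext_int ((frobenius _ p).comp _) (Int.castRingHom _)] at hfrob
  rw [map_map, RingHom.ext_int ((residue _).comp _) (Int.castRingHom _)] at hy_eval ⊢
  simp only [Function.comp_def, frobenius_def] at hfrob
  simp only [map_pow]
  rw [← hfrob]
  exact pow_ne_zero p hy_eval

variable [IsAlgClosed K]

lemma exists_isRoot_norm_lt_one {h : Polynomial K} (hlt : ‖h.eval 0‖ < ‖h.eval 1‖) :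
    ∃ α, h.IsRoot α ∧ ‖α‖ < 1 := by
  have hfactor (t : K) :
      ‖h.eval t‖ = ‖h.leadingCoeff‖ * (h.roots.map fun α ↦ ‖t - α‖).prod := by
    have hnorm := map_multiset_prod (normHom : K →*₀ ℝ) (h.roots.map fun α ↦ t - α)
    rw [Multiset.map_map] at hnorm
    rw [(IsAlgClosed.splits h).eval_eq_prod_roots, norm_mul]
    exact congrArg _ hnorm
  by_contra! hroots
  refine hlt.not_ge ?_
  rw [hfactor, hfactor]
  refine mul_le_mul_of_nonneg_left ?_ (norm_nonneg _)
  refine Multiset.prod_map_le_prod_map₀ _ _ (fun _ _ ↦ norm_nonneg _) fun α hα ↦ ?_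
  rw [zero_sub, norm_neg]
  refine (norm_sub_le_max 1 α).trans (max_le ?_ le_rfl)
  rw [norm_one]
  exact hroots α (Polynomial.mem_roots'.1 hα).2

/- On the line from `y` to a point `w` where `r` attains its Gauss norm, `r` would otherwise vanish
at a point residually equal to `y`. -/
theorem norm_coeff_le_norm_eval_of_ne_zero (hΦ : ∀ ν, ‖Φ.coeff ν‖ ≤ 1) {r : MvPolynomial σ K}
    (hr : ∀ y ∈ unitLocus Φ, eval y r ≠ 0) {y : σ → K} (hy : y ∈ unitLocus Φ) (ν : σ →₀ ℕ) :
    ‖r.coeff ν‖ ≤ ‖eval y r‖ := by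
  by_contra! hlt
  obtain ⟨w, hw, hwr⟩ := exists_norm_coeff_le_norm_eval r
  let h : Polynomial K := aeval (fun i ↦ Polynomial.C (y i) + .X * .C (w i - y i)) r
  have heval (t : K) : h.eval t = eval (fun i ↦ y i + t * (w i - y i)) r := by
    rw [← Polynomial.coe_aeval_eq_eval, ← MvPolynomial.coe_aeval_eq_eval]
    simp [h, ← AlgHom.comp_apply, comp_aeval]
  obtain ⟨α, hα, hα_lt⟩ := exists_isRoot_norm_lt_one (h := h) <| by
    simpa only [heval, zero_mul, add_zero, one_mul, add_sub_cancel] using hlt.trans_le (hwr ν)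
  refine hr _ (mem_unitLocus_of_norm_sub_lt_one hΦ hy fun i ↦ ?_) ((heval α).symm.trans hα)
  rw [add_sub_cancel_left, norm_mul]
  refine mul_lt_one_of_nonneg_of_lt_one_left (norm_nonneg _) hα_lt ?_
  exact (norm_sub_le_max _ _).trans (max_le (hw i) (hy.1 i))

end Residue

section Evaluation

open MvPowerSeries

variable {σ K : Type*} [Fintype σ] [NormedField K] {c d : MvPowerSeries σ K} {y : σ → K} {A B : K}

/-- The power series `c` converges at the point `y`, with sum `A`. -/
def HasSumAt (c : MvPowerSeries σ K) (y : σ → K) (A : K) : Prop :=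
  HasSum (fun ν : σ →₀ ℕ ↦ coeff ν c * ∏ i, y i ^ ν i) A

namespace HasSumAt

lemma add (hc : HasSumAt c y A) (hd : HasSumAt d y B) : HasSumAt (c + d) y (A + B) := by
  simpa only [HasSumAt, map_add, add_mul] using HasSum.add hc hd

lemma sub (hc : HasSumAt c y A) (hd : HasSumAt d y B) : HasSumAt (c - d) y (A - B) := by
  simpa only [HasSumAt, map_sub, sub_mul] using HasSum.sub hc hd

lemma monomial_mul (hc : HasSumAt c y A) (μ : σ →₀ ℕ) (k : K) :
    HasSumAt (monomial μ k * c) y (k * (∏ i, y i ^ μ i) * A) := by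
  refine ((add_right_injective μ).hasSum_iff fun ν hν ↦ ?_).1 ?_
  · rw [coeff_monomial_mul, if_neg (fun hle ↦ hν ⟨ν - μ, add_tsub_cancel_of_le hle⟩), zero_mul]
  · refine (HasSum.mul_left (k * ∏ i, y i ^ μ i) hc).congr_fun fun ν ↦ ?_
    simp only [Function.comp_apply, coeff_add_monomial_mul, Finsupp.add_apply, pow_add,
      Finset.prod_mul_distrib]
    ring

lemma coe_mul (hc : HasSumAt c y A) (P : MvPolynomial σ K) :
    HasSumAt ((P : MvPowerSeries σ K) * c) y (MvPolynomial.eval y P * A) := by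
  induction P using MvPolynomial.induction_on' with
  | monomial μ k =>
    rw [MvPolynomial.coe_monomial, MvPolynomial.eval_monomial, Finsupp.prod_fintype _ _ (by simp)]
    exact hc.monomial_mul μ k
  | add P Q hP hQ =>
    rw [MvPolynomial.coe_add, map_add, add_mul, add_mul]
    exact hP.add hQ

end HasSumAt

lemma hasSumAt_one (y : σ → K) : HasSumAt 1 y 1 := by
  have h := hasSum_single (f := fun ν ↦ coeff ν (1 : MvPowerSeries σ K) * ∏ i, y i ^ ν i) 0
    fun ν hν ↦ by rw [coeff_one, if_neg hν, zero_mul]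
  simpa [HasSumAt] using h

lemma hasSumAt_coe (P : MvPolynomial σ K) (y : σ → K) :
    HasSumAt (P : MvPowerSeries σ K) y (MvPolynomial.eval y P) := by
  simpa only [mul_one] using (hasSumAt_one y).coe_mul P

lemma hasSumAt_rescale_iff {z : σ → K} : HasSumAt (rescale z c) y A ↔ HasSumAt c (z * y) A := by
  simp only [HasSumAt, coeff_rescale, Pi.mul_apply, mul_pow, Finset.prod_mul_distrib]
  refine iff_of_eq (congrArg (HasSum · A) (funext fun ν ↦ ?_))
  rw [Finsupp.prod_fintype _ _ (by simp)]
  ring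

lemma prod_norm_pow_le_one (hy : ∀ i, ‖y i‖ ≤ 1) (ν : σ →₀ ℕ) : ‖∏ i, y i ^ ν i‖ ≤ 1 := by
  rw [norm_prod]
  refine Finset.prod_le_one (fun _ _ ↦ norm_nonneg _) fun i _ ↦ ?_
  rw [norm_pow]
  exact pow_le_one₀ (norm_nonneg _) (hy i)

lemma exists_norm_mem_Ioo [IsAlgClosed K] {x : K} (hx_ne : x ≠ 0) (hx : ‖x‖ < 1) {r : ℝ}
    (hr : r < 1) : ∃ s : K, ‖s‖ ∈ Set.Ioo r 1 := by
  obtain ⟨k, hk⟩ := exists_pow_lt_of_lt_one (norm_pos_iff.2 hx_ne) (max_lt hr zero_lt_one)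
  obtain ⟨s, rfl⟩ := IsAlgClosed.exists_pow_nat_eq x k.succ_pos
  rw [norm_pow] at hx hk
  have hs : ‖s‖ < 1 := (pow_lt_one_iff_of_nonneg (norm_nonneg s) k.succ_ne_zero).1 hx
  refine ⟨s, (le_max_left r 0).trans_lt ?_, hs⟩
  refine lt_of_pow_lt_pow_left₀ k (norm_nonneg s) (hk.trans_le ?_)
  exact pow_le_pow_of_le_one (norm_nonneg s) hs.le k.le_succ

variable [IsUltrametricDist K] {ε : ℝ}

lemma HasSumAt.norm_sub_eval_truncFinset_le (hc : HasSumAt c y A) (hy : ∀ i, ‖y i‖ ≤ 1)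
    (hε : 0 ≤ ε) {s : Finset (σ →₀ ℕ)} (hs : ∀ ν ∉ s, ‖coeff ν c‖ ≤ ε) :
    ‖A - MvPolynomial.eval y (truncFinset K s c)‖ ≤ ε := by
  have heval : MvPolynomial.eval y (truncFinset K s c) = ∑ ν ∈ s, coeff ν c * ∏ i, y i ^ ν i := by
    simp [truncFinset_apply, MvPolynomial.eval_monomial, Finsupp.prod_fintype]
  rw [heval]
  refine norm_sub_sum_le_of_hasSum hc s hε fun ν hν ↦ ?_
  rw [norm_mul]
  exact (mul_le_of_le_one_right (norm_nonneg _) (prod_norm_pow_le_one hy ν)).trans (hs ν hν)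

lemma HasSumAt.norm_le (hc : HasSumAt c y A) (hy : ∀ i, ‖y i‖ ≤ 1) (hcε : CoeffBound c ε) :
    ‖A‖ ≤ ε := by
  simpa [truncFinset_apply] using
    hc.norm_sub_eval_truncFinset_le (s := ∅) hy hcε.nonneg fun ν _ ↦ hcε ν

lemma CoeffBound.exists_hasSumAt [CompleteSpace K] (hc : CoeffBound c ε) (hy : ∀ i, ‖y i‖ < 1) :
    ∃ A, HasSumAt c y A := by
  refine (NonarchimedeanAddGroup.summable_iff_tendsto_cofinite_zero _).2 ?_
  rw [tendsto_zero_iff_norm_tendsto_zero, Metric.tendsto_nhds]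
  intro δ hδ
  have hy_norm : ‖y‖ < 1 := (pi_norm_lt_iff one_pos).2 hy
  refine (finite_setOf_le_mul_pow_degree hc (norm_nonneg y) hy_norm hδ).subset fun ν hν ↦ ?_
  have hmon : ‖∏ i, y i ^ ν i‖ ≤ ‖y‖ ^ ν.degree := by
    rw [norm_prod, Finsupp.degree_eq_sum, ← Finset.prod_pow_eq_pow_sum]
    exact Finset.prod_le_prod (fun _ _ ↦ norm_nonneg _) fun i _ ↦ by
      rw [norm_pow]
      exact pow_le_pow_left₀ (norm_nonneg _) (norm_le_pi_norm y i) _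
  have hδν : δ ≤ ‖coeff ν c * ∏ i, y i ^ ν i‖ := by simpa using hν
  rw [norm_mul] at hδν
  exact hδν.trans (mul_le_mul_of_nonneg_left hmon (norm_nonneg _))

variable [IsAlgClosed K]

lemma coeffBound_of_forall_norm_le_one (hε : 0 < ε)
    (hc : ∀ y : σ → K, (∀ i, ‖y i‖ ≤ 1) → ∃ A, HasSumAt c y A ∧ ‖A‖ ≤ ε) : CoeffBound c ε := by
  have hfinite : {ν | ε < ‖coeff ν c‖}.Finite := by
    obtain ⟨A, hA, -⟩ := hc 1 (by simp)
    have htendsto := (tendsto_zero_iff_norm_tendsto_zero.1 hA.summable.tendsto_cofinite_zero)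
    refine ((Metric.tendsto_nhds.1 htendsto) ε hε).subset fun ν hν ↦ ?_
    simpa using (Set.mem_ofPred.1 hν).le
  intro ν
  by_contra! hν
  obtain ⟨z, hz, hzP⟩ := exists_norm_coeff_le_norm_eval (truncFinset K hfinite.toFinset c)
  obtain ⟨A, hA, hA_le⟩ := hc z hz
  have hsub := hA.norm_sub_eval_truncFinset_le hz hε.le (s := hfinite.toFinset) fun μ hμ ↦ by
    simpa using hμ
  specialize hzP ν
  rw [coeff_truncFinset_of_mem _ (by simpa using hν)] at hzP
  rw [← sub_sub_cancel A (MvPolynomial.eval z _)] at hzP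
  exact hν.not_ge (hzP.trans ((norm_sub_le_max _ _).trans (max_le hA_le hsub)))

/- Rescaling by `s` with `‖s‖ < 1` reduces to the closed polydisk; then `‖s‖` tends to `1`. -/
theorem coeffBound_of_forall_norm_lt_one {x : K} (hx_ne : x ≠ 0) (hx : ‖x‖ < 1) (hε : 0 < ε)
    (hc : ∀ y : σ → K, (∀ i, ‖y i‖ < 1) → ∃ A, HasSumAt c y A ∧ ‖A‖ ≤ ε) : CoeffBound c ε := by
  intro ν
  have hle : ∀ r ∈ Set.Ico (0 : ℝ) 1, r ^ ν.degree * ‖coeff ν c‖ ≤ ε := fun r hr ↦ by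
    obtain ⟨s, hrs, hs⟩ := exists_norm_mem_Ioo hx_ne hx hr.2
    have hscaled : CoeffBound (rescale (fun _ ↦ s) c) ε :=
      coeffBound_of_forall_norm_le_one hε fun y hy ↦ by
        simp only [hasSumAt_rescale_iff]
        refine hc _ fun i ↦ ?_
        rw [Pi.mul_apply, norm_mul]
        exact mul_lt_one_of_nonneg_of_lt_one_left (norm_nonneg _) hs (hy i)
    have hν := hscaled ν
    rw [coeff_rescale, Finsupp.prod, Finset.prod_pow_eq_pow_sum, norm_mul, norm_pow] at hν
    exact (mul_le_mul_of_nonneg_right (pow_le_pow_left₀ hr.1 hrs.le _) (norm_nonneg _)).trans hν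
  have htendsto : Filter.Tendsto (fun r : ℝ ↦ r ^ ν.degree * ‖coeff ν c‖) (nhdsWithin 1 (Set.Iio 1))
      (nhds ‖coeff ν c‖) :=
    (Continuous.tendsto' (by fun_prop) _ _ (by simp)).mono_left nhdsWithin_le_nhds
  refine le_of_tendsto htendsto ?_
  filter_upwards [Ico_mem_nhdsLT zero_lt_one] with r hr using hle r hr

end Evaluation

section BoundedClosure

open MvPowerSeries

variable {σ K : Type*} [NormedField K]

/-- `c` is a limit of bounded elements of `A`, for the supremum of the norms of the coefficients. -/
def IsBoundedLimit (A : Subalgebra K (MvPowerSeries σ K)) (c : MvPowerSeries σ K) : Prop :=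
  ∀ ε > 0, ∃ w ∈ A, (∃ C, CoeffBound w C) ∧ CoeffBound (c - w) ε

variable {A : Subalgebra K (MvPowerSeries σ K)} {c d : MvPowerSeries σ K}

lemma isBoundedLimit_of_mem (hc : c ∈ A) {C : ℝ} (hcC : CoeffBound c C) : IsBoundedLimit A c :=
  fun ε hε ↦ ⟨c, hc, ⟨C, hcC⟩, fun ν ↦ by simpa using hε.le⟩

lemma coeffBound_C (k : K) : CoeffBound (C k : MvPowerSeries σ K) ‖k‖ := fun ν ↦ by
  rw [coeff_C]
  split_ifs <;> simp

variable [IsUltrametricDist K]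

namespace IsBoundedLimit

lemma exists_coeffBound (hc : IsBoundedLimit A c) : ∃ C, CoeffBound c C := by
  obtain ⟨w, -, ⟨C, hC⟩, hcw⟩ := hc 1 one_pos
  rw [← sub_add_cancel c w]
  exact ⟨max 1 C, (hcw.mono (le_max_left 1 C)).add (hC.mono (le_max_right 1 C))⟩

lemma add (hc : IsBoundedLimit A c) (hd : IsBoundedLimit A d) : IsBoundedLimit A (c + d) := by
  intro ε hε
  obtain ⟨w, hw, ⟨C, hC⟩, hcw⟩ := hc ε hε
  obtain ⟨v, hv, ⟨D, hD⟩, hdv⟩ := hd ε hε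
  refine ⟨w + v, add_mem hw hv,
    ⟨max C D, (hC.mono (le_max_left C D)).add (hD.mono (le_max_right C D))⟩, ?_⟩
  rw [add_sub_add_comm]
  exact hcw.add hdv

lemma mul (hc : IsBoundedLimit A c) (hd : IsBoundedLimit A d) : IsBoundedLimit A (c * d) := by
  intro ε hε
  obtain ⟨C, hC⟩ := hc.exists_coeffBound
  have hC_nonneg := hC.nonneg
  obtain ⟨v, hv, ⟨D, hD⟩, hdv⟩ := hd (ε / (C + 1)) (by positivity)
  have hD_nonneg := hD.nonneg
  obtain ⟨w, hw, ⟨E, hE⟩, hcw⟩ := hc (ε / (D + 1)) (by positivity)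
  refine ⟨w * v, mul_mem hw hv, ⟨E * D, hE.mul hD⟩, ?_⟩
  rw [show c * d - w * v = c * (d - v) + (c - w) * v by ring]
  refine CoeffBound.add ((hC.mul hdv).mono ?_) ((hcw.mul hD).mono ?_)
  · rw [← mul_div_assoc, div_le_iff₀ (by positivity)]
    nlinarith
  · rw [div_mul_eq_mul_div, div_le_iff₀ (by positivity)]
    nlinarith

end IsBoundedLimit

/-- The closure of the bounded elements of `A`, for the supremum of the norms of the
coefficients. -/
def boundedClosure (A : Subalgebra K (MvPowerSeries σ K)) : Subalgebra K (MvPowerSeries σ K) where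
  carrier := {c | IsBoundedLimit A c}
  add_mem' := IsBoundedLimit.add
  mul_mem' := IsBoundedLimit.mul
  algebraMap_mem' k := isBoundedLimit_of_mem (A.algebraMap_mem k) (coeffBound_C k)

lemma mem_boundedClosure_of_forall_exists
    (hc : ∀ ε > 0, ∃ w ∈ boundedClosure A, CoeffBound (c - w) ε) : c ∈ boundedClosure A := by
  intro ε hε
  obtain ⟨w, hw, hcw⟩ := hc ε hε
  obtain ⟨v, hv, hv_bound, hwv⟩ := hw ε hε
  exact ⟨v, hv, hv_bound, sub_add_sub_cancel c w v ▸ hcw.add hwv⟩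

lemma expand_mem_boundedClosure {p : ℕ} (hp : p ≠ 0) (hA : ∀ w ∈ A, expand p hp w ∈ A)
    (hc : c ∈ boundedClosure A) : expand p hp c ∈ boundedClosure A := by
  intro ε hε
  obtain ⟨w, hw, ⟨C, hC⟩, hcw⟩ := hc ε hε
  exact ⟨_, hA w hw, ⟨C, hC.expand hp⟩, map_sub (expand p hp) c w ▸ hcw.expand hp⟩

lemma HasSumR.mem_boundedClosure {ι : Type*} {N : ℕ} {A : Subalgebra K (MvPowerSeries (Fin N) K)}
    {f : ι → MvPowerSeries (Fin N) K} {g : MvPowerSeries (Fin N) K} {d : ℝ} (h : HasSumR f g)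
    (hf : ∀ i, f i ∈ boundedClosure A) (hfd : ∀ i, CoeffBound (f i) d) (hg : memR g) :
    g ∈ boundedClosure A :=
  mem_boundedClosure_of_forall_exists fun ε hε ↦ by
    obtain ⟨s, hs⟩ := (h.eventually_lt_const hε).exists
    exact ⟨_, sum_mem fun i (_ : i ∈ s) ↦ hf i, (hg.sub_sum hfd s).coeffBound.mono hs.le⟩

lemma exists_one_sub_mul_eq_one (hc : c ∈ boundedClosure A) {τ : ℝ} (hcτ : CoeffBound c τ)
    (hτ : τ < 1) : ∃ t ∈ boundedClosure A, (1 - c) * t = 1 := by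
  have hone : CoeffBound (1 : MvPowerSeries σ K) 1 := by simpa using coeffBound_C (σ := σ) (1 : K)
  have hconst : ‖constantCoeff (1 - c)‖ = 1 := by
    refine (norm_eq_of_norm_sub_lt ?_).trans norm_one
    rw [map_sub, map_one, sub_sub_cancel_left, norm_neg, norm_one]
    exact (hcτ 0).trans_lt hτ
  have hconst_ne : constantCoeff (1 - c) ≠ 0 := norm_ne_zero_iff.1 (hconst ▸ one_ne_zero)
  have hinv : CoeffBound (1 - c)⁻¹ 1 := by
    simpa only [hconst, inv_one] using
      CoeffBound.inv hconst_ne (hconst ▸ hone.sub (hcτ.mono hτ.le))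
  have hpow (k : ℕ) : CoeffBound (c ^ k) (τ ^ k) := by
    induction k with
    | zero => simpa only [pow_zero] using hone
    | succ k ih => simpa only [pow_succ] using ih.mul hcτ
  refine ⟨(1 - c)⁻¹, mem_boundedClosure_of_forall_exists fun ε hε ↦ ?_,
    MvPowerSeries.mul_inv_cancel _ hconst_ne⟩
  obtain ⟨k, hk⟩ := exists_pow_lt_of_lt_one hε hτ
  refine ⟨∑ i ∈ Finset.range k, c ^ i, sum_mem fun i _ ↦ pow_mem hc i, ?_⟩
  have htail : (1 - c)⁻¹ - ∑ i ∈ Finset.range k, c ^ i = (1 - c)⁻¹ * c ^ k := by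
    rw [sub_eq_iff_eq_add', ← sub_eq_iff_eq_add, ← mul_one_sub, ← mul_neg_geom_sum, ← mul_assoc,
      MvPowerSeries.inv_mul_cancel _ hconst_ne, one_mul]
  rw [htail]
  exact (hinv.mul (hpow k)).mono (by rw [one_mul]; exact hk.le)

theorem exists_mul_eq_one_of_coeffBound_sub {f v w : MvPowerSeries σ K} {C D : ℝ}
    (hf : f ∈ boundedClosure A) (hw : w ∈ boundedClosure A) (hvw : v * w = 1)
    (hfv : CoeffBound (f - v) C) (hwD : CoeffBound w D) (hCD : C * D < 1) :
    ∃ t ∈ boundedClosure A, f * t = 1 := by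
  have hsmall : CoeffBound (1 - f * w) (C * D) := by
    rw [← hvw, ← sub_mul, ← neg_sub f v, neg_mul]
    exact (hfv.mul hwD).neg
  obtain ⟨t, ht, hmul⟩ :=
    exists_one_sub_mul_eq_one (sub_mem (one_mem _) (mul_mem hf hw)) hsmall hCD
  exact ⟨w * t, mul_mem hw ht, by rw [← mul_assoc, ← hmul, sub_sub_cancel]⟩

end BoundedClosure

section RationalExpansion

open MvPowerSeries

variable {σ K : Type*} [NormedField K]

/-- `w` is the expansion at the origin of the rational function `q / r`, which is defined at every
point of `unitLocus Φ`. -/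
structure IsRatExpansion (Φ q r : MvPolynomial σ K) (w : MvPowerSeries σ K) : Prop where
  eval_ne_zero : ∀ y ∈ unitLocus Φ, MvPolynomial.eval y r ≠ 0
  coe_mul_eq : (r : MvPowerSeries σ K) * w = q

variable {Φ q r q' r' : MvPolynomial σ K} {w w' : MvPowerSeries σ K}

namespace IsRatExpansion

lemma add (hw : IsRatExpansion Φ q r w) (hw' : IsRatExpansion Φ q' r' w') :
    IsRatExpansion Φ (q * r' + r * q') (r * r') (w + w') where
  eval_ne_zero y hy := by
    rw [map_mul]
    exact mul_ne_zero (hw.eval_ne_zero y hy) (hw'.eval_ne_zero y hy)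
  coe_mul_eq := by
    push_cast
    rw [← hw.coe_mul_eq, ← hw'.coe_mul_eq]
    ring

lemma neg (hw : IsRatExpansion Φ q r w) : IsRatExpansion Φ (-q) r (-w) where
  eval_ne_zero := hw.eval_ne_zero
  coe_mul_eq := by
    rw [mul_neg, hw.coe_mul_eq]
    exact (map_neg MvPolynomial.coeToMvPowerSeries.ringHom q).symm

lemma mul (hw : IsRatExpansion Φ q r w) (hw' : IsRatExpansion Φ q' r' w') :
    IsRatExpansion Φ (q * q') (r * r') (w * w') where
  eval_ne_zero y hy := by
    rw [map_mul]
    exact mul_ne_zero (hw.eval_ne_zero y hy) (hw'.eval_ne_zero y hy)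
  coe_mul_eq := by
    push_cast
    rw [← hw.coe_mul_eq, ← hw'.coe_mul_eq]
    ring

lemma expand (hw : IsRatExpansion Φ q r w) {p : ℕ} (hp : p ≠ 0)
    (hΦ : ∀ y ∈ unitLocus Φ, y ^ p ∈ unitLocus Φ) :
    IsRatExpansion Φ (MvPolynomial.expand p q) (MvPolynomial.expand p r)
      (MvPowerSeries.expand p hp w) where
  eval_ne_zero y hy := by
    rw [MvPolynomial.eval_expand]
    exact hw.eval_ne_zero _ (hΦ y hy)
  coe_mul_eq := by
    rw [← expand_eq_expand p hp, ← expand_eq_expand p hp, ← map_mul, hw.coe_mul_eq]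

end IsRatExpansion

lemma isRatExpansion_coe (P : MvPolynomial σ K) : IsRatExpansion Φ P 1 P :=
  ⟨by simp, by simp⟩

/-- The algebra of the expansions at the origin of the rational functions defined at every point of
`unitLocus Φ`. -/
def ratSubalgebra (Φ : MvPolynomial σ K) : Subalgebra K (MvPowerSeries σ K) where
  carrier := {w | ∃ q r, IsRatExpansion Φ q r w}
  add_mem' := fun ⟨_, _, hw⟩ ⟨_, _, hw'⟩ ↦ ⟨_, _, hw.add hw'⟩
  mul_mem' := fun ⟨_, _, hw⟩ ⟨_, _, hw'⟩ ↦ ⟨_, _, hw.mul hw'⟩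
  algebraMap_mem' k :=
    ⟨.C k, 1, by simpa [MvPowerSeries.algebraMap_apply] using isRatExpansion_coe (Φ := Φ) (.C k)⟩

lemma IsRatExpansion.mem_ratSubalgebra (hw : IsRatExpansion Φ q r w) : w ∈ ratSubalgebra Φ :=
  ⟨q, r, hw⟩

lemma expand_mem_ratSubalgebra {p : ℕ} (hp : p ≠ 0) (hΦ : ∀ y ∈ unitLocus Φ, y ^ p ∈ unitLocus Φ)
    (hw : w ∈ ratSubalgebra Φ) : expand p hp w ∈ ratSubalgebra Φ := by
  obtain ⟨q, r, hw⟩ := hw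
  exact (hw.expand hp hΦ).mem_ratSubalgebra

lemma exists_coeffBound_coe (P : MvPolynomial σ K) :
    ∃ C, CoeffBound (P : MvPowerSeries σ K) C := by
  refine ⟨∑ ν ∈ P.support, ‖P.coeff ν‖, fun ν ↦ ?_⟩
  rw [MvPolynomial.coeff_coe]
  by_cases hν : ν ∈ P.support
  · exact Finset.single_le_sum (f := fun ν ↦ ‖P.coeff ν‖) (fun _ _ ↦ norm_nonneg _) hν
  · rw [MvPolynomial.notMem_support_iff.1 hν, norm_zero]
    positivity

variable [IsUltrametricDist K] [IsAlgClosed K]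

lemma coeffBound_coe_of_forall_eval_ne_zero (hΦ : ∀ ν, ‖Φ.coeff ν‖ ≤ 1) (hΦ₀ : Φ.coeff 0 = 1)
    (hr : ∀ y ∈ unitLocus Φ, MvPolynomial.eval y r ≠ 0) :
    constantCoeff (r : MvPowerSeries σ K) ≠ 0 ∧
      CoeffBound (r : MvPowerSeries σ K) ‖constantCoeff (r : MvPowerSeries σ K)‖ := by
  have hzero : (0 : σ → K) ∈ unitLocus Φ := mem_unitLocus_of_norm_lt_one hΦ hΦ₀ (by simp)
  have hconst : constantCoeff (r : MvPowerSeries σ K) = MvPolynomial.eval 0 r := by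
    rw [MvPolynomial.eval_zero, MvPolynomial.constantCoeff_eq, ← MvPolynomial.coeff_coe,
      coeff_zero_eq_constantCoeff_apply]
  rw [hconst]
  refine ⟨hr 0 hzero, fun ν ↦ ?_⟩
  rw [MvPolynomial.coeff_coe]
  exact norm_coeff_le_norm_eval_of_ne_zero hΦ hr hzero ν

lemma exists_isRatExpansion (hΦ : ∀ ν, ‖Φ.coeff ν‖ ≤ 1) (hΦ₀ : Φ.coeff 0 = 1)
    (q : MvPolynomial σ K) (hr : ∀ y ∈ unitLocus Φ, MvPolynomial.eval y r ≠ 0) :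
    ∃ w, IsRatExpansion Φ q r w := by
  refine ⟨(r : MvPowerSeries σ K)⁻¹ * q, hr, ?_⟩
  rw [← mul_assoc, MvPowerSeries.mul_inv_cancel _
    (coeffBound_coe_of_forall_eval_ne_zero hΦ hΦ₀ hr).1, one_mul]

namespace IsRatExpansion

lemma exists_coeffBound (hΦ : ∀ ν, ‖Φ.coeff ν‖ ≤ 1) (hΦ₀ : Φ.coeff 0 = 1)
    (hw : IsRatExpansion Φ q r w) : ∃ C, CoeffBound w C := by
  obtain ⟨hr_ne, hr⟩ := coeffBound_coe_of_forall_eval_ne_zero hΦ hΦ₀ hw.eval_ne_zero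
  obtain ⟨C, hC⟩ := exists_coeffBound_coe q
  have hw_eq : (r : MvPowerSeries σ K)⁻¹ * q = w := by
    rw [← hw.coe_mul_eq, ← mul_assoc, MvPowerSeries.inv_mul_cancel _ hr_ne, one_mul]
  exact ⟨_, hw_eq ▸ (hr.inv hr_ne).mul hC⟩

lemma mem_boundedClosure (hΦ : ∀ ν, ‖Φ.coeff ν‖ ≤ 1) (hΦ₀ : Φ.coeff 0 = 1)
    (hw : IsRatExpansion Φ q r w) : w ∈ boundedClosure (ratSubalgebra Φ) := by
  obtain ⟨C, hC⟩ := hw.exists_coeffBound hΦ hΦ₀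
  exact isBoundedLimit_of_mem hw.mem_ratSubalgebra hC

lemma norm_div_le (hΦ : ∀ ν, ‖Φ.coeff ν‖ ≤ 1) (hΦ₀ : Φ.coeff 0 = 1)
    (hw : IsRatExpansion Φ q r w) {ε : ℝ} (hwε : CoeffBound w ε) {y : σ → K}
    (hy : y ∈ unitLocus Φ) : ‖MvPolynomial.eval y q / MvPolynomial.eval y r‖ ≤ ε := by
  have hε := hwε.nonneg
  have hr := (coeffBound_coe_of_forall_eval_ne_zero hΦ hΦ₀ hw.eval_ne_zero).2
  have hq : CoeffBound (q : MvPowerSeries σ K) (‖MvPolynomial.eval y r‖ * ε) := by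
    rw [← hw.coe_mul_eq]
    refine CoeffBound.mul (hr.mono ?_) hwε
    rw [← coeff_zero_eq_constantCoeff_apply, MvPolynomial.coeff_coe]
    exact norm_coeff_le_norm_eval_of_ne_zero hΦ hw.eval_ne_zero hy 0
  rw [norm_div, div_le_iff₀' (norm_pos_iff.2 (hw.eval_ne_zero y hy))]
  exact norm_eval_le (by positivity) (fun ν ↦ by simpa using hq ν) hy.1

lemma norm_div_sub_div_le (hΦ : ∀ ν, ‖Φ.coeff ν‖ ≤ 1) (hΦ₀ : Φ.coeff 0 = 1)
    (hw : IsRatExpansion Φ q r w) (hw' : IsRatExpansion Φ q' r' w') {ε : ℝ}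
    (hε : CoeffBound (w - w') ε) {y : σ → K} (hy : y ∈ unitLocus Φ) :
    ‖MvPolynomial.eval y q / MvPolynomial.eval y r -
      MvPolynomial.eval y q' / MvPolynomial.eval y r'‖ ≤ ε := by
  rw [sub_eq_add_neg] at hε
  simpa [div_sub_div _ _ (hw.eval_ne_zero y hy) (hw'.eval_ne_zero y hy), sub_eq_add_neg]
    using (hw.add hw'.neg).norm_div_le hΦ hΦ₀ hε hy

variable [Fintype σ] [CompleteSpace K]

lemma hasSumAt (hΦ : ∀ ν, ‖Φ.coeff ν‖ ≤ 1) (hΦ₀ : Φ.coeff 0 = 1) (hw : IsRatExpansion Φ q r w)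
    {y : σ → K} (hy : ∀ i, ‖y i‖ < 1) :
    HasSumAt w y (MvPolynomial.eval y q / MvPolynomial.eval y r) := by
  obtain ⟨C, hC⟩ := hw.exists_coeffBound hΦ hΦ₀
  obtain ⟨A, hA⟩ := hC.exists_hasSumAt hy
  have hmul := hA.coe_mul r
  rw [hw.coe_mul_eq] at hmul
  rw [(hasSumAt_coe q y).unique hmul,
    mul_div_cancel_left₀ A (hw.eval_ne_zero y (mem_unitLocus_of_norm_lt_one hΦ hΦ₀ hy))]
  exact hA

end IsRatExpansion

section UniformLimit

variable {q r : ℕ → MvPolynomial σ K} {w : ℕ → MvPowerSeries σ K} {c : MvPowerSeries σ K}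
  {b : ℕ → ℝ}

lemma uniformCauchySeqOn_eval_div_eval (hΦ : ∀ ν, ‖Φ.coeff ν‖ ≤ 1) (hΦ₀ : Φ.coeff 0 = 1)
    (hw : ∀ k, IsRatExpansion Φ (q k) (r k) (w k)) (hc : ∀ k, CoeffBound (c - w k) (b k))
    (hb : Filter.Tendsto b Filter.atTop (nhds 0)) :
    UniformCauchySeqOn (fun k y ↦ MvPolynomial.eval y (q k) / MvPolynomial.eval y (r k))
      Filter.atTop (unitLocus Φ) := by
  refine Metric.uniformCauchySeqOn_iff.2 fun ε hε ↦ ?_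
  obtain ⟨k₀, hk₀⟩ := Filter.eventually_atTop.1 (hb.eventually_lt_const hε)
  refine ⟨k₀, fun j hj k hk y hy ↦ ?_⟩
  have hjk : CoeffBound (w j - w k) (max (b j) (b k)) :=
    sub_sub_sub_cancel_left (w k) (w j) c ▸
      ((hc k).mono (le_max_right _ _)).sub ((hc j).mono (le_max_left _ _))
  rw [dist_eq_norm]
  exact ((hw j).norm_div_sub_div_le hΦ hΦ₀ (hw k) hjk hy).trans_lt (max_lt (hk₀ j hj) (hk₀ k hk))

lemma tendsto_eval_div_eval [Fintype σ] [CompleteSpace K] (hΦ : ∀ ν, ‖Φ.coeff ν‖ ≤ 1)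
    (hΦ₀ : Φ.coeff 0 = 1) (hw : ∀ k, IsRatExpansion Φ (q k) (r k) (w k))
    (hc : ∀ k, CoeffBound (c - w k) (b k)) (hb : Filter.Tendsto b Filter.atTop (nhds 0))
    {y : σ → K} (hy : ∀ i, ‖y i‖ < 1) {A : K} (hA : HasSumAt c y A) :
    Filter.Tendsto (fun k ↦ MvPolynomial.eval y (q k) / MvPolynomial.eval y (r k)) Filter.atTop
      (nhds A) := by
  refine tendsto_iff_norm_sub_tendsto_zero.2 (squeeze_zero (fun _ ↦ norm_nonneg _) (fun k ↦ ?_) hb)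
  rw [norm_sub_rev]
  exact (hA.sub ((hw k).hasSumAt hΦ hΦ₀ hy)).norm_le (fun i ↦ (hy i).le) (hc k)

theorem exists_tendstoUniformlyOn_eval_div_eval [Fintype σ] [CompleteSpace K]
    (hΦ : ∀ ν, ‖Φ.coeff ν‖ ≤ 1) (hΦ₀ : Φ.coeff 0 = 1)
    (hw : ∀ k, IsRatExpansion Φ (q k) (r k) (w k)) (hc : ∀ k, CoeffBound (c - w k) (b k))
    (hb : Filter.Tendsto b Filter.atTop (nhds 0)) :
    ∃ G : (σ → K) → K,
      TendstoUniformlyOn (fun k y ↦ MvPolynomial.eval y (q k) / MvPolynomial.eval y (r k)) G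
        Filter.atTop (unitLocus Φ) ∧ ∀ y, (∀ i, ‖y i‖ < 1) → HasSumAt c y (G y) := by
  have hcauchy := uniformCauchySeqOn_eval_div_eval hΦ hΦ₀ hw hc hb
  choose! G hG using fun y hy ↦ cauchySeq_tendsto_of_complete (hcauchy.cauchySeq (x := y) hy)
  refine ⟨G, hcauchy.tendstoUniformlyOn_of_tendsto hG, fun y hy ↦ ?_⟩
  obtain ⟨C, hC⟩ := (hw 0).exists_coeffBound hΦ hΦ₀
  have hc_bound : CoeffBound c (max (b 0) C) :=
    sub_add_cancel c (w 0) ▸ ((hc 0).mono (le_max_left _ _)).add (hC.mono (le_max_right _ _))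
  obtain ⟨A, hA⟩ := hc_bound.exists_hasSumAt hy
  rwa [tendsto_nhds_unique (hG y (mem_unitLocus_of_norm_lt_one hΦ hΦ₀ hy))
    (tendsto_eval_div_eval hΦ hΦ₀ hw hc hb hy hA)]

end UniformLimit

end RationalExpansion

section UnitLocusExtension

open MvPowerSeries

variable {σ K : Type*} [Fintype σ] [NormedField K] {Φ : MvPolynomial σ K} {c : MvPowerSeries σ K}

/-- `c` converges on the open unit polydisk, and its sum extends to a function on `unitLocus Φ`
which is a uniform limit of rational functions defined at every point of `unitLocus Φ`. -/
def ExtendsToUnitLocus (Φ : MvPolynomial σ K) (c : MvPowerSeries σ K) : Prop :=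
  ∃ (q r : ℕ → MvPolynomial σ K) (G : (σ → K) → K),
    (∀ k, ∀ y ∈ unitLocus Φ, MvPolynomial.eval y (r k) ≠ 0) ∧
    TendstoUniformlyOn (fun k y ↦ MvPolynomial.eval y (q k) / MvPolynomial.eval y (r k)) G
      Filter.atTop (unitLocus Φ) ∧
    ∀ y, (∀ i, ‖y i‖ < 1) → HasSumAt c y (G y)

variable [IsUltrametricDist K] [IsAlgClosed K] [CompleteSpace K]

lemma extendsToUnitLocus_of_mem_boundedClosure (hΦ : ∀ ν, ‖Φ.coeff ν‖ ≤ 1) (hΦ₀ : Φ.coeff 0 = 1)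
    (hc : c ∈ boundedClosure (ratSubalgebra Φ)) : ExtendsToUnitLocus Φ c := by
  choose w hw _ hcw using fun k : ℕ ↦ hc (1 / ((k : ℝ) + 1)) Nat.one_div_pos_of_nat
  choose q r hw using hw
  obtain ⟨G, hG, hsum⟩ := exists_tendstoUniformlyOn_eval_div_eval hΦ hΦ₀ hw hcw
    tendsto_one_div_add_atTop_nhds_zero_nat
  exact ⟨q, r, G, fun k ↦ (hw k).eval_ne_zero, hG, hsum⟩

lemma ExtendsToUnitLocus.mem_boundedClosure (hΦ : ∀ ν, ‖Φ.coeff ν‖ ≤ 1) (hΦ₀ : Φ.coeff 0 = 1)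
    {x : K} (hx_ne : x ≠ 0) (hx : ‖x‖ < 1) (hc : ExtendsToUnitLocus Φ c) :
    c ∈ boundedClosure (ratSubalgebra Φ) := by
  obtain ⟨q, r, G, hr, hG, hsum⟩ := hc
  intro ε hε
  obtain ⟨k, hk⟩ := (Metric.tendstoUniformlyOn_iff.1 hG ε hε).exists
  obtain ⟨w, hw⟩ := exists_isRatExpansion hΦ hΦ₀ (q k) (hr k)
  refine ⟨w, hw.mem_ratSubalgebra, hw.exists_coeffBound hΦ hΦ₀,
    coeffBound_of_forall_norm_lt_one hx_ne hx hε fun y hy ↦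
      ⟨_, (hsum y hy).sub (hw.hasSumAt hΦ hΦ₀ hy), ?_⟩⟩
  rw [← dist_eq_norm]
  exact (hk y (mem_unitLocus_of_norm_lt_one hΦ hΦ₀ hy)).le

end UnitLocusExtension

section Truncation

variable {p n N : ℕ} {a : Fin (N + 1) → Fin n → ℤ}

/-- The truncation `Φ₁` as a polynomial in the `λ_i/λ_0`. The base ring is arbitrary because the
stability of the unit locus under `p`-th powers comes from the integrality of `Φ₁`. -/
noncomputable def Phi1Poly (p : ℕ) {n N : ℕ} (a : Fin (N + 1) → Fin n → ℤ) (R : Type*)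
    [CommRing R] : MvPolynomial (Fin N) R :=
  ∑ l ∈ (Fintype.piFinset fun _ : Fin N ↦ Finset.range p).filter
      (fun l ↦ l ∈ LplusSet a ∧ ∑ i : Fin N, l i ≤ p - 1),
    MvPolynomial.monomial (Finsupp.equivFunOnFinite.symm l)
      ((-1) ^ (∑ i : Fin N, l i) * (Nat.multinomial Finset.univ l : R))

lemma map_Phi1Poly {R S : Type*} [CommRing R] [CommRing S] (f : R →+* S) :
    MvPolynomial.map f (Phi1Poly p a R) = Phi1Poly p a S := by
  simp [Phi1Poly, map_sum]

lemma eval_Phi1Poly {K : Type*} [Field K] (lam : Fin (N + 1) → K) :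
    MvPolynomial.eval (fun i ↦ lam i.succ / lam 0) (Phi1Poly p a K) = Phi1 p a lam := by
  simp [Phi1Poly, Phi1, map_sum, MvPolynomial.eval_monomial, Finsupp.prod_fintype]

lemma coe_Phi1Poly {K : Type*} [Field K] (hp : 0 < p) :
    (Phi1Poly p a K : MvPowerSeries (Fin N) K) = Phi1Series p a K := by
  ext ν
  have hmem : ⇑ν ∈ (Fintype.piFinset fun _ : Fin N ↦ Finset.range p).filter
      (fun l ↦ l ∈ LplusSet a ∧ ∑ i : Fin N, l i ≤ p - 1) ↔
      ⇑ν ∈ LplusSet a ∧ ∑ i : Fin N, ν i ≤ p - 1 := by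
    simp only [Finset.mem_filter, Fintype.mem_piFinset, Finset.mem_range, and_iff_right_iff_imp]
    intro h i
    have := Finset.single_le_sum (fun i _ ↦ Nat.zero_le (ν i)) (Finset.mem_univ i)
    omega
  simp only [MvPolynomial.coeff_coe, Phi1Poly, MvPolynomial.coeff_sum, MvPolynomial.coeff_monomial,
    Equiv.symm_apply_eq, Finset.sum_ite_eq']
  exact if_congr hmem rfl rfl

variable {K : Type*} [NormedField K]

lemma coeff_zero_Phi1Poly (hp : 0 < p) : (Phi1Poly p a K).coeff 0 = 1 := by
  rw [← MvPolynomial.coeff_coe, coe_Phi1Poly hp]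
  exact constantCoeff_Phi1Series

lemma norm_coeff_Phi1Poly_le [IsUltrametricDist K] (hp : 0 < p) (ν : Fin N →₀ ℕ) :
    ‖(Phi1Poly p a K).coeff ν‖ ≤ 1 := by
  rw [← MvPolynomial.coeff_coe, coe_Phi1Poly hp]
  exact coeffBound_Phi1Series ν

lemma pow_mem_unitLocus_Phi1Poly [IsUltrametricDist K] [Fact p.Prime] (hp : ‖(p : K)‖ < 1)
    {y : Fin N → K} (hy : y ∈ unitLocus (Phi1Poly p a K)) :
    y ^ p ∈ unitLocus (Phi1Poly p a K) := by
  rw [← map_Phi1Poly (Int.castRingHom K)] at hy ⊢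
  exact pow_mem_unitLocus hp _ hy

lemma mem_Dplus_iff {lam : Fin (N + 1) → K} :
    lam ∈ Dplus p a ↔
      lam 0 ≠ 0 ∧ (fun i : Fin N ↦ lam i.succ / lam 0) ∈ unitLocus (Phi1Poly p a K) := by
  simp only [Dplus, unitLocus, Set.mem_ofPred_eq, eval_Phi1Poly]

end Truncation

section ExtensionToDplus

open MvPowerSeries

variable {p n N : ℕ} {a : Fin (N + 1) → Fin n → ℤ} {K : Type*} [NormedField K]
  {c : MvPowerSeries (Fin N) K}

-- Only the ratios `λ_i/λ_0` matter, so `𝒟` and `𝒟_+` may be replaced by their slices at `λ_0 = 1`.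
lemma memR'_iff_extendsToUnitLocus :
    memR' p a c ↔ ExtendsToUnitLocus (Phi1Poly p a K) c := by
  have hcons (y : Fin N → K) : (fun i : Fin N ↦ (Fin.cons 1 y : Fin (N + 1) → K) i.succ /
      (Fin.cons 1 y : Fin (N + 1) → K) 0) = y := by simp
  have hcons_mem {y : Fin N → K} (hy : y ∈ unitLocus (Phi1Poly p a K)) :
      (Fin.cons 1 y : Fin (N + 1) → K) ∈ Dplus p a :=
    mem_Dplus_iff.2 ⟨one_ne_zero, (hcons y).symm ▸ hy⟩
  constructor
  · rintro ⟨F, ⟨u, hu, hF⟩, hsum⟩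
    choose q r hr hqr using hu
    refine ⟨q, r, fun y ↦ F (Fin.cons 1 y), fun k y hy ↦ ?_, ?_, fun y hy ↦ ?_⟩
    · simpa only [hcons] using hr k _ (hcons_mem hy)
    · refine ((hF.comp (Fin.cons 1)).mono fun y ↦ hcons_mem).congr (.of_forall fun k y hy ↦ ?_)
      simpa only [Function.comp_apply, hcons] using hqr k _ (hcons_mem hy)
    · have h : HasSumAt c (fun i ↦ _ / _) (F (Fin.cons 1 y)) :=
        hsum (Fin.cons 1 y) ⟨one_ne_zero, fun i ↦ congr_fun (hcons y) i ▸ hy i⟩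
      rwa [hcons] at h
  · rintro ⟨q, r, G, hr, hG, hsum⟩
    exact ⟨fun lam ↦ G fun i ↦ lam i.succ / lam 0,
      ⟨fun k lam ↦ _, fun k ↦ ⟨q k, r k, fun lam hlam ↦ hr k _ (mem_Dplus_iff.1 hlam).2,
        fun lam _ ↦ rfl⟩, (hG.comp _).mono fun lam hlam ↦ (mem_Dplus_iff.1 hlam).2⟩,
      fun lam hlam ↦ hsum _ hlam.2⟩

variable [IsUltrametricDist K]

/-- The ring `R'`, as a subalgebra of the power series in the `λ_i/λ_0`. -/
noncomputable def subalgebraR' (p : ℕ) {n N : ℕ} (a : Fin (N + 1) → Fin n → ℤ) (K : Type*)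
    [NormedField K] [IsUltrametricDist K] : Subalgebra K (MvPowerSeries (Fin N) K) :=
  boundedClosure (ratSubalgebra (Phi1Poly p a K))

variable [hp : Fact p.Prime] [CompleteSpace K] [IsAlgClosed K] [NormedAlgebra ℚ_[p] K]

theorem memR'_iff_mem_subalgebraR' : memR' p a c ↔ c ∈ subalgebraR' p a K := by
  have hΦ := norm_coeff_Phi1Poly_le (a := a) (K := K) hp.out.pos
  have hΦ₀ := coeff_zero_Phi1Poly (a := a) (K := K) hp.out.pos
  rw [memR'_iff_extendsToUnitLocus]
  exact ⟨fun hc ↦ hc.mem_boundedClosure hΦ hΦ₀ (prime_ne_zero p K) (norm_prime_lt_one p K),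
    extendsToUnitLocus_of_mem_boundedClosure hΦ hΦ₀⟩

end ExtensionToDplus

section InverseInR'

open MvPowerSeries

lemma coe_trunc'_eq_self {σ R : Type*} [CommSemiring R] {f : MvPowerSeries σ R} {d : σ →₀ ℕ}
    (hf : ∀ ν, ¬ν ≤ d → coeff ν f = 0) : (trunc' R d f : MvPowerSeries σ R) = f := by
  ext ν
  rw [MvPolynomial.coeff_coe, coeff_trunc']
  split_ifs with hν
  · rfl
  · exact (hf ν hν).symm

variable {p : ℕ} [hp : Fact p.Prime] {n N : ℕ} {a : Fin (N + 1) → Fin n → ℤ} {K : Type*}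
  [NormedField K] [IsUltrametricDist K] {f : MvPowerSeries (Fin N) K}

lemma frobR_mem_subalgebraR' [NormedAlgebra ℚ_[p] K] (hf : f ∈ subalgebraR' p a K) :
    frobR p f ∈ subalgebraR' p a K := by
  rw [frobR_eq_expand hp.out.ne_zero]
  exact expand_mem_boundedClosure _ (fun _ ↦ expand_mem_ratSubalgebra _ fun _ ↦
    pow_mem_unitLocus_Phi1Poly (norm_prime_lt_one p K)) hf

variable [IsAlgClosed K]

lemma coe_mem_subalgebraR' (P : MvPolynomial (Fin N) K) :
    (P : MvPowerSeries (Fin N) K) ∈ subalgebraR' p a K :=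
  (isRatExpansion_coe P).mem_boundedClosure (norm_coeff_Phi1Poly_le hp.out.pos)
    (coeff_zero_Phi1Poly hp.out.pos)

lemma Bone_mem_subalgebraR' (π : K) (μ : Fin (n + 1) → ℤ) :
    Bone p a π μ ∈ subalgebraR' p a K := by
  have hBone : ∀ ν, ¬ν ≤ Finsupp.equivFunOnFinite.symm (fun _ : Fin N ↦ (μ 0).toNat) →
      coeff ν (Bone p a π μ) = 0 := by
    refine fun ν hν ↦ if_neg fun h ↦ hν fun i ↦ ?_
    have := Finset.single_le_sum (fun i _ ↦ Nat.cast_nonneg (α := ℤ) (ν i)) (Finset.mem_univ i)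
    have := h.1
    simp only [Finsupp.equivFunOnFinite_symm_apply_apply]
    omega
  rw [← coe_trunc'_eq_self hBone]
  exact coe_mem_subalgebraR' _

lemma exists_mul_Phi1Series_eq_one :
    ∃ v ∈ subalgebraR' p a K, CoeffBound v 1 ∧ Phi1Series p a K * v = 1 := by
  have hmul : Phi1Series p a K * (Phi1Series p a K)⁻¹ = 1 :=
    MvPowerSeries.mul_inv_cancel _ (constantCoeff_Phi1Series (K := K) ▸ one_ne_zero)
  have hrat : IsRatExpansion (Phi1Poly p a K) 1 (Phi1Poly p a K) (Phi1Series p a K)⁻¹ :=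
    ⟨fun y hy ↦ norm_ne_zero_iff.1 (hy.2 ▸ one_ne_zero),
      by rw [coe_Phi1Poly hp.out.pos, hmul, MvPolynomial.coe_one]⟩
  refine ⟨_, hrat.mem_boundedClosure (norm_coeff_Phi1Poly_le hp.out.pos)
    (coeff_zero_Phi1Poly hp.out.pos), ?_, hmul⟩
  have hbound := CoeffBound.inv (f := Phi1Series p a K)
  simp only [constantCoeff_Phi1Series, norm_one, inv_one] at hbound
  exact hbound one_ne_zero coeffBound_Phi1Series

variable [NormedAlgebra ℚ_[p] K]

lemma etaTerm_mem_subalgebraR' {π : K} {ξ : Msub a → MvPowerSeries (Fin N) K}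
    (hξ : ∀ μ, ξ μ ∈ subalgebraR' p a K) (ρ : Fin (n + 1) → ℤ) (ν : Msub a) :
    etaTerm p a π ξ ρ ν ∈ subalgebraR' p a K := by
  unfold etaTerm
  split_ifs
  · exact Subalgebra.smul_mem _
      (mul_mem (Bone_mem_subalgebraR' _ _) (frobR_mem_subalgebraR' (hξ ν))) _
  · exact zero_mem _

variable {π : K} {η : MvPowerSeries (Fin N) K}

lemma memR'_eta [CompleteSpace K] (hπ : π ^ (p - 1) = -(p : K)) (hp3 : 3 ≤ p)
    {ξ : Msub a → MvPowerSeries (Fin N) K} {X : ℝ} (hξ : ∀ μ, CoeffBound (ξ μ) X)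
    (hξ' : ∀ μ, memR' p a (ξ μ)) {ρ : Msub a} (hη : HasSumR (etaTerm p a π ξ ρ.1) η)
    (hηR : memR η) : memR' p a η := by
  simp only [memR'_iff_mem_subalgebraR'] at hξ' ⊢
  exact hη.mem_boundedClosure (etaTerm_mem_subalgebraR' hξ' ρ.1)
    (coeffBound_etaTerm_sub_one hπ hp3 hξ ρ) hηR

theorem invR'_of_coeffBound_sub_mul_frobR [CompleteSpace K] (hπ : π ^ (p - 1) = -(p : K))
    (hη : memR' p a η) (hf : invR f) (hf' : invR' p a f)
    (hηf : CoeffBound (η - ((p : K) • Phi1Series p a K) * frobR p f)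
      (‖π‖ ^ p * ‖constantCoeff f‖)) : invR' p a η := by
  obtain ⟨-, g, hg, hfg⟩ := hf'
  obtain ⟨hf_ne, hf_bound⟩ := invR_iff.1 hf
  obtain ⟨v, hv, hv_bound, hΦv⟩ := exists_mul_Phi1Series_eq_one (p := p) (a := a) (K := K)
  have hg_inv : f⁻¹ = g := by
    rw [← mul_one f⁻¹, ← hfg, ← mul_assoc, MvPowerSeries.inv_mul_cancel _ hf_ne, one_mul]
  have hg_bound : CoeffBound g ‖constantCoeff f‖⁻¹ := hg_inv ▸ hf_bound.inv hf_ne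
  have hmul : ((p : K) • Phi1Series p a K) * frobR p f * ((p : K)⁻¹ • (v * frobR p g)) = 1 := by
    rw [smul_mul_assoc, smul_mul_smul_comm, mul_inv_cancel₀ (prime_ne_zero p K), one_smul,
      mul_mul_mul_comm, hΦv, frobR_eq_expand hp.out.ne_zero, frobR_eq_expand hp.out.ne_zero,
      ← map_mul, hfg, map_one, mul_one]
  have hbound := (hv_bound.mul (hg_bound.expand hp.out.ne_zero)).smul (p : K)⁻¹
  rw [← frobR_eq_expand, norm_inv, norm_prime_eq, inv_inv, one_mul] at hbound
  have hsmall : ‖π‖ ^ p * ‖constantCoeff f‖ * (p * ‖constantCoeff f‖⁻¹) < 1 := by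
    have hp_ne : (p : ℝ) ≠ 0 := mod_cast hp.out.ne_zero
    have hf_norm := norm_ne_zero_iff.2 hf_ne
    rw [← mul_pow_sub_one hp.out.ne_zero, norm_uniformizer_pow hπ]
    field_simp
    exact norm_uniformizer_lt_one hπ
  rw [memR'_iff_mem_subalgebraR'] at hη hg
  obtain ⟨t, ht, hηt⟩ := exists_mul_eq_one_of_coeffBound_sub hη
    (Subalgebra.smul_mem _ (mul_mem hv (frobR_mem_subalgebraR' hg)) _) hmul hηf hbound hsmall
  exact ⟨memR'_iff_mem_subalgebraR'.2 hη, t, memR'_iff_mem_subalgebraR'.2 ht, hηt⟩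

end InverseInR'

end AHG

/-- if `ξ_{â_0}` is invertible in `R` and `‖ξ_{â_0}‖ = ‖ξ‖`, then
`η_{â_0}` is invertible in `R` and `‖α*(ξ)‖ = ‖η_{â_0}‖ = (1/p)‖ξ_{â_0}‖`; if moreover
`ξ ∈ S'` and `ξ_{â_0}` is invertible in `R'`, then `η_{â_0}` is invertible in `R'`. -/
theorem stmt_11 (p : ℕ) [Fact p.Prime] (hp2 : p ≠ 2)
    {K : Type*} [NormedField K] [IsUltrametricDist K] [CompleteSpace K] [IsAlgClosed K]
    (ι : ℚ_[p] →+* K) (hι : ∀ x, ‖ι x‖ = ‖x‖)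
    (π : K) (hπ : π ^ (p - 1) = -(p : K))
    (n N : ℕ) (hn : 0 < n) (hN : 0 < N) (a : Fin (N + 1) → Fin n → ℤ)
    (hΔ : AHG.uniqueInteriorPoint a)
    (μ0 : AHG.Msub a) (hμ0 : μ0.1 = AHG.hat (a 0))
    (ξ : AHG.Msub a → MvPowerSeries (Fin N) K) (hξ : AHG.memS a ξ)
    (hinv : AHG.invR (ξ μ0)) (hn0 : AHG.Snorm a ξ = AHG.Rnorm (ξ μ0))
    (η : AHG.Msub a → MvPowerSeries (Fin N) K)
    (hη : ∀ ρ : AHG.Msub a, AHG.HasSumR (AHG.etaTerm p a π ξ ρ.1) (η ρ))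
    (hηS : AHG.memS a η) :
    AHG.invR (η μ0) ∧
    AHG.Snorm a η = AHG.Rnorm (η μ0) ∧
    AHG.Rnorm (η μ0) = (p : ℝ)⁻¹ * AHG.Rnorm (ξ μ0) ∧
    (AHG.memS' p a ξ → AHG.invR' p a (ξ μ0) → AHG.invR' p a (η μ0)) := by
  let : NormedAlgebra ℚ_[p] K :=
    { ι.toAlgebra with
      norm_smul_le := fun x y ↦ ((norm_mul (ι x) y).trans (congr_arg (· * ‖y‖) (hι x))).le }
  have hp3 : 3 ≤ p := (Fact.out : p.Prime).two_le.lt_of_ne' hp2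
  obtain ⟨hξ_ne, hξ_bound⟩ := AHG.invR_iff.1 hinv
  have hξX μ : AHG.CoeffBound (ξ μ) ‖MvPowerSeries.constantCoeff (ξ μ0)‖ :=
    hξ_bound.Rnorm_eq ▸ hn0 ▸ hξ.coeffBound μ
  have hηR ρ : AHG.memR (η ρ) := (hηS.coeffBound ρ).memR
  have hηX ρ := AHG.coeffBound_eta hπ hp3 hξX (hη ρ) (hηR ρ)
  have hcong := AHG.coeffBound_eta_sub_mul_frobR hπ hp3 hΔ hμ0 hξX (hη μ0) (hηR μ0)
  have hnorm := AHG.norm_constantCoeff_eq_of_coeffBound_sub hπ hξ_ne hcong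
  rw [← hnorm] at hηX
  have hη_ne : MvPowerSeries.constantCoeff (η μ0) ≠ 0 := by
    rw [← norm_ne_zero_iff, hnorm, ← AHG.norm_prime_eq (K := K)]
    exact mul_ne_zero (norm_ne_zero_iff.2 (AHG.prime_ne_zero p K)) (norm_ne_zero_iff.2 hξ_ne)
  have hη_Rnorm := (hηX μ0).Rnorm_eq
  exact ⟨AHG.invR_iff.2 ⟨hη_ne, hηX μ0⟩, AHG.CoeffBound.Snorm_eq (hη_Rnorm ▸ hηX),
    hη_Rnorm.trans (hξ_bound.Rnorm_eq ▸ hnorm), fun hξ' hinv' ↦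
      AHG.invR'_of_coeffBound_sub_mul_frobR hπ
        (AHG.memR'_eta hπ hp3 hξX hξ'.2 (hη μ0) (hηR μ0)) hinv hinv' hcong⟩
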